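/- arXiv:2201.03975 — 3 statements merged into one kernel-verified Lean document; each statement's English description precedes it below -/
import Mathlib

section
/- Let a ≥ b > 0 and let N ∈ ℕ with N ≥ 4. Then M(L(N)) = N − 1 and there exists ε > 0 such that M(ℓ) = N for every ℓ with L(N) < ℓ ≤ L(N) + ε. Conversely, if M is discontinuous at some ℓ > 0, then ℓ = L(N) for some integer N ≥ 4. -/
open Set

/-- Interior of the tile `T(k,l)` of the `a×b` grid. -/
noncomputable def tileInt (a b : ℝ) (k l : ℤ) : Set (ℝ × ℝ) :=
  Set.Ioo ((k : ℝ) * a) (((k : ℝ) + 1) * a) ×ˢ Set.Ioo ((l : ℝ) * b) (((l : ℝ) + 1) * b)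

/-- Number of tiles of the `a×b` grid visited by the closed segment with endpoints `p`, `q`. -/
noncomputable def visitCount (a b : ℝ) (p q : ℝ × ℝ) : ℕ :=
  Set.ncard {kl : ℤ × ℤ | (segment ℝ p q ∩ tileInt a b kl.1 kl.2).Nonempty}

/-- Normalized width of the discrete bounding rectangle of the segment with endpoints `p`, `q`. -/
noncomputable def normWidth (a : ℝ) (p q : ℝ × ℝ) : ℤ :=
  ⌈max p.1 q.1 / a⌉ - ⌊min p.1 q.1 / a⌋

/-- Normalized height of the discrete bounding rectangle of the segment with endpoints `p`, `q`. -/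
noncomputable def normHeight (b : ℝ) (p q : ℝ × ℝ) : ℤ :=
  ⌈max p.2 q.2 / b⌉ - ⌊min p.2 q.2 / b⌋

/-- Euclidean length of the segment with endpoints `p`, `q`. -/
noncomputable def segLen (p q : ℝ × ℝ) : ℝ :=
  Real.sqrt ((p.1 - q.1) ^ 2 + (p.2 - q.2) ^ 2)

/-- `maxTiles a b ℓ` : maximum number of tiles of the `a×b` grid visited by a segment of length `ℓ`. -/
noncomputable def maxTiles (a b ℓ : ℝ) : ℕ :=
  sSup {n : ℕ | ∃ p q : ℝ × ℝ, segLen p q = ℓ ∧ visitCount a b p q = n}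

/-- `infLen a b N` : infimum of lengths of segments visiting at least `N` tiles of the `a×b` grid. -/
noncomputable def infLen (a b : ℝ) (N : ℕ) : ℝ :=
  sInf {ℓ : ℝ | 0 < ℓ ∧ ∃ p q : ℝ × ℝ, segLen p q = ℓ ∧ N ≤ visitCount a b p q}

/-- `minIntLen N` : minimum positive integer length of a segment visiting at least `N` tiles
of the unit square grid. -/
noncomputable def minIntLen (N : ℕ) : ℕ :=
  sInf {L : ℕ | 1 ≤ L ∧ ∃ p q : ℝ × ℝ, segLen p q = (L : ℝ) ∧ N ≤ visitCount 1 1 p q}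

/-- The set of visited tiles. -/
def visSet (a b : ℝ) (p q : ℝ × ℝ) : Set (ℤ × ℤ) :=
  {kl : ℤ × ℤ | (segment ℝ p q ∩ tileInt a b kl.1 kl.2).Nonempty}

lemma mem_visSet (a b : ℝ) (p q : ℝ × ℝ) (kl : ℤ × ℤ) :
    kl ∈ visSet a b p q ↔ ∃ t : ℝ, 0 ≤ t ∧ t ≤ 1 ∧
      (kl.1 : ℝ) * a < p.1 + t * (q.1 - p.1) ∧ p.1 + t * (q.1 - p.1) < ((kl.1 : ℝ) + 1) * a ∧
      (kl.2 : ℝ) * b < p.2 + t * (q.2 - p.2) ∧ p.2 + t * (q.2 - p.2) < ((kl.2 : ℝ) + 1) * b := by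
  unfold visSet tileInt
  simp only [segment_eq_image', Set.mem_ofPred_eq]
  constructor
  · rintro ⟨x, ⟨t, ht, rfl⟩, h⟩
    simp only [Set.mem_prod, Set.mem_Ioo, Prod.fst_add, Prod.snd_add, Prod.smul_fst, Prod.smul_snd,
      Prod.fst_sub, Prod.snd_sub, smul_eq_mul] at h
    exact ⟨t, ht.1, ht.2, h.1.1, h.1.2, h.2.1, h.2.2⟩
  · rintro ⟨t, h0, h1, h2, h3, h4, h5⟩
    refine ⟨_, ⟨t, ⟨h0, h1⟩, rfl⟩, ?_⟩
    simp only [Set.mem_prod, Set.mem_Ioo, Prod.fst_add, Prod.snd_add, Prod.smul_fst, Prod.smul_snd,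
      Prod.fst_sub, Prod.snd_sub, smul_eq_mul]
    exact ⟨⟨h2, h3⟩, h4, h5⟩

lemma visitCount_eq (a b : ℝ) (p q : ℝ × ℝ) : visitCount a b p q = (visSet a b p q).ncard := rfl

lemma visSet_symm (a b : ℝ) (p q : ℝ × ℝ) : visSet a b p q = visSet a b q p := by
  unfold visSet
  rw [segment_symm]

/-- One-dimensional bound on the indices of the visited columns. -/
lemma index_bound {a x y : ℝ} (ha : 0 < a) :
    ∃ K : ℤ, ∀ (k : ℤ) (t : ℝ), 0 ≤ t → t ≤ 1 → (k : ℝ) * a < x + t * (y - x) →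
      x + t * (y - x) < ((k : ℝ) + 1) * a → K ≤ k ∧ k ≤ K + ⌊|y - x| / a⌋ + 1 := by
  have key : ∀ {x y : ℝ}, x ≤ y → ∀ (k : ℤ) (t : ℝ), 0 ≤ t → t ≤ 1 →
      (k : ℝ) * a < x + t * (y - x) → x + t * (y - x) < ((k : ℝ) + 1) * a →
      ⌊x / a⌋ ≤ k ∧ k ≤ ⌊x / a⌋ + ⌊|y - x| / a⌋ + 1 := by
    intro x y hxy k t h0 h1 h2 h3
    rw [abs_of_nonneg (sub_nonneg.2 hxy)]
    have e1 : x ≤ x + t * (y - x) := by nlinarith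
    have e2 : x + t * (y - x) ≤ y := by nlinarith
    constructor
    · have : x / a < ((k + 1 : ℤ) : ℝ) := by
        rw [div_lt_iff₀ ha]; push_cast; linarith
      have := Int.floor_lt.2 this
      omega
    · have e3 : (k : ℝ) < y / a := by
        rw [lt_div_iff₀ ha]; linarith
      have e4 : y / a = x / a + (y - x) / a := by ring
      have e5 := Int.lt_floor_add_one (x / a)
      have e6 := Int.lt_floor_add_one ((y - x) / a)
      have : (k : ℝ) < ((⌊x / a⌋ + ⌊(y - x) / a⌋ + 2 : ℤ) : ℝ) := by
        push_cast; linarith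
      have := Int.cast_lt.1 this
      omega
  rcases le_total x y with h | h
  · exact ⟨⌊x / a⌋, key h⟩
  · refine ⟨⌊y / a⌋, fun k t h0 h1 h2 h3 => ?_⟩
    have := key h k (1 - t) (by linarith) (by linarith) (by linarith) (by linarith)
    rwa [abs_sub_comm] at this

lemma count_aux (V : Set (ℤ × ℤ)) (g : ℤ × ℤ → ℤ) (A : ℤ) (n : ℕ)
    (hg : Set.InjOn g V) (hr : ∀ v ∈ V, A ≤ g v ∧ g v < A + n) : V.Finite ∧ V.ncard ≤ n := by
  have hsub : g '' V ⊆ (Finset.Ico A (A + n) : Finset ℤ) := by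
    rintro _ ⟨v, hv, rfl⟩
    simpa using hr v hv
  have hfin : (g '' V).Finite := (Finset.finite_toSet _).subset hsub
  refine ⟨hfin.of_finite_image hg, ?_⟩
  rw [← hg.ncard_image]
  refine (Set.ncard_le_ncard hsub (Finset.finite_toSet _)).trans ?_
  rw [Set.ncard_coe_finset]
  simp

lemma visSet_bound {a b : ℝ} (ha : 0 < a) (hb : 0 < b) (p q : ℝ × ℝ) :
    (visSet a b p q).Finite ∧
      (visSet a b p q).ncard ≤ ⌊|q.1 - p.1| / a⌋₊ + ⌊|q.2 - p.2| / b⌋₊ + 3 := by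
  wlog hpq : p.1 ≤ q.1 generalizing p q with H
  · have := H q p (by linarith)
    rwa [visSet_symm, abs_sub_comm p.1, abs_sub_comm p.2] at this
  obtain ⟨K, hK⟩ := index_bound (x := p.1) (y := q.1) ha
  obtain ⟨L, hL⟩ := index_bound (x := p.2) (y := q.2) hb
  have hi : ((⌊|q.1 - p.1| / a⌋₊ : ℕ) : ℤ) = ⌊|q.1 - p.1| / a⌋ :=
    Int.natCast_floor_eq_floor (by positivity)
  have hj : ((⌊|q.2 - p.2| / b⌋₊ : ℕ) : ℤ) = ⌊|q.2 - p.2| / b⌋ :=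
    Int.natCast_floor_eq_floor (by positivity)
  rw [← hi] at hK
  rw [← hj] at hL
  -- order of the parameters
  have hx : ∀ {k k' : ℤ} {t t' : ℝ}, p.1 + t * (q.1 - p.1) < ((k : ℝ) + 1) * a →
      (k' : ℝ) * a < p.1 + t' * (q.1 - p.1) → k < k' → t < t' := by
    intro k k' t t' h1 h2 h3
    have h4 : ((k : ℝ) + 1) ≤ k' := by exact_mod_cast h3
    have h5 := mul_le_mul_of_nonneg_right h4 ha.le
    by_contra hc
    push Not at hc
    nlinarith
  have hinc : p.2 ≤ q.2 → ∀ {l l' : ℤ} {t t' : ℝ}, p.2 + t * (q.2 - p.2) < ((l : ℝ) + 1) * b →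
      (l' : ℝ) * b < p.2 + t' * (q.2 - p.2) → l < l' → t < t' := by
    intro h l l' t t' h1 h2 h3
    have h4 : ((l : ℝ) + 1) ≤ l' := by exact_mod_cast h3
    have h5 := mul_le_mul_of_nonneg_right h4 hb.le
    by_contra hc
    push Not at hc
    nlinarith
  have hdec : q.2 ≤ p.2 → ∀ {l l' : ℤ} {t t' : ℝ}, p.2 + t * (q.2 - p.2) < ((l : ℝ) + 1) * b →
      (l' : ℝ) * b < p.2 + t' * (q.2 - p.2) → l < l' → t' < t := by
    intro h l l' t t' h1 h2 h3
    have h4 : ((l : ℝ) + 1) ≤ l' := by exact_mod_cast h3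
    have h5 := mul_le_mul_of_nonneg_right h4 hb.le
    by_contra hc
    push Not at hc
    nlinarith
  rcases le_total p.2 q.2 with h | h
  · apply count_aux _ (fun v => v.1 + v.2) (K + L)
    · rintro ⟨k, l⟩ hv ⟨k', l'⟩ hv' he
      obtain ⟨t, -, -, h1, h2, h3, h4⟩ := (mem_visSet _ _ _ _ _).1 hv
      obtain ⟨t', -, -, h1', h2', h3', h4'⟩ := (mem_visSet _ _ _ _ _).1 hv'
      simp only at he h1 h2 h3 h4 h1' h2' h3' h4'
      rcases lt_trichotomy k k' with hk | hk | hk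
      · have := hx h2 h1' hk
        have := hinc h h4' h3 (by omega)
        linarith
      · simp only [Prod.mk.injEq]; omega
      · have := hx h2' h1 hk
        have := hinc h h4 h3' (by omega)
        linarith
    · rintro ⟨k, l⟩ hv
      obtain ⟨t, h0, h1, h2, h3, h4, h5⟩ := (mem_visSet _ _ _ _ _).1 hv
      have := hK k t h0 h1 h2 h3
      have := hL l t h0 h1 h4 h5
      simp only
      push_cast
      omega
  · apply count_aux _ (fun v => v.1 - v.2) (K - (L + ⌊|q.2 - p.2| / b⌋₊ + 1))
    · rintro ⟨k, l⟩ hv ⟨k', l'⟩ hv' he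
      obtain ⟨t, -, -, h1, h2, h3, h4⟩ := (mem_visSet _ _ _ _ _).1 hv
      obtain ⟨t', -, -, h1', h2', h3', h4'⟩ := (mem_visSet _ _ _ _ _).1 hv'
      simp only at he h1 h2 h3 h4 h1' h2' h3' h4'
      rcases lt_trichotomy k k' with hk | hk | hk
      · have := hx h2 h1' hk
        have := hdec h h4 h3' (by omega)
        linarith
      · simp only [Prod.mk.injEq]; omega
      · have := hx h2' h1 hk
        have := hdec h h4' h3 (by omega)
        linarith
    · rintro ⟨k, l⟩ hv
      obtain ⟨t, h0, h1, h2, h3, h4, h5⟩ := (mem_visSet _ _ _ _ _).1 hv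
      have := hK k t h0 h1 h2 h3
      have := hL l t h0 h1 h4 h5
      simp only
      push_cast
      omega

/-- The candidate lengths. -/
noncomputable def fLen (a b : ℝ) (i j : ℕ) : ℝ := Real.sqrt ((i * a) ^ 2 + (j * b) ^ 2)

lemma segLen_scale (p q : ℝ × ℝ) (s : ℝ) (hs : 0 ≤ s) :
    segLen p (p.1 + s * (q.1 - p.1), p.2 + s * (q.2 - p.2)) = s * segLen p q := by
  unfold segLen
  simp only
  rw [show (p.1 - (p.1 + s * (q.1 - p.1))) ^ 2 + (p.2 - (p.2 + s * (q.2 - p.2))) ^ 2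
    = s ^ 2 * ((p.1 - q.1) ^ 2 + (p.2 - q.2) ^ 2) by ring, Real.sqrt_mul (by positivity),
    Real.sqrt_sq hs]

lemma fLen_le {a b : ℝ} (ha : 0 < a) (hb : 0 < b) {p q : ℝ × ℝ} {N : ℕ}
    (h : N + 3 ≤ visitCount a b p q) : ∃ i j : ℕ, i + j = N ∧ fLen a b i j ≤ segLen p q := by
  have h1 := (visSet_bound ha hb p q).2
  rw [← visitCount_eq] at h1
  set I := ⌊|q.1 - p.1| / a⌋₊ with hI
  set J := ⌊|q.2 - p.2| / b⌋₊ with hJ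
  have hIa : (I : ℝ) * a ≤ |q.1 - p.1| := by
    rw [← le_div_iff₀ ha]; exact Nat.floor_le (by positivity)
  have hJb : (J : ℝ) * b ≤ |q.2 - p.2| := by
    rw [← le_div_iff₀ hb]; exact Nat.floor_le (by positivity)
  refine ⟨min I N, N - min I N, by omega, ?_⟩
  have e1 : ((min I N : ℕ) : ℝ) ≤ I := by exact_mod_cast min_le_left _ _
  have e2 : ((N - min I N : ℕ) : ℝ) ≤ J := by
    have : N - min I N ≤ J := by omega
    exact_mod_cast this
  unfold fLen segLen
  apply Real.sqrt_le_sqrt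
  apply add_le_add
  · rw [← sq_abs (p.1 - q.1), abs_sub_comm]
    apply pow_le_pow_left₀ (by positivity)
    exact (mul_le_mul_of_nonneg_right e1 ha.le).trans hIa
  · rw [← sq_abs (p.2 - q.2), abs_sub_comm p.2]
    apply pow_le_pow_left₀ (by positivity)
    exact (mul_le_mul_of_nonneg_right e2 hb.le).trans hJb

/-- Existence of a parameter just after a crossing. -/
lemma after_crossing {I J δ t : ℝ} (hI : 0 < I) (hJ : 0 < J) (ht1 : t < 1)
    (k l : ℤ) (h1 : (k : ℝ) ≤ -δ + t * I) (h2 : -δ + t * I < k + 1)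
    (h3 : (l : ℝ) ≤ -δ + t * J) (h4 : -δ + t * J < l + 1) :
    ∃ s, t < s ∧ s ≤ 1 ∧ (k : ℝ) < -δ + s * I ∧ -δ + s * I < k + 1 ∧
      (l : ℝ) < -δ + s * J ∧ -δ + s * J < l + 1 := by
  have c1 : ∀ᶠ s in nhdsWithin t (Set.Ioi t), -δ + s * I < k + 1 := by
    apply nhdsWithin_le_nhds
    exact (Continuous.tendsto (by fun_prop : Continuous fun s : ℝ => -δ + s * I) t).eventually_lt_const h2
  have c2 : ∀ᶠ s in nhdsWithin t (Set.Ioi t), -δ + s * J < l + 1 := by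
    apply nhdsWithin_le_nhds
    exact (Continuous.tendsto (by fun_prop : Continuous fun s : ℝ => -δ + s * J) t).eventually_lt_const h4
  have c3 : ∀ᶠ s in nhdsWithin t (Set.Ioi t), s < 1 :=
    nhdsWithin_le_nhds (Iio_mem_nhds ht1)
  obtain ⟨s, hs1, hs2, hs3, hs4⟩ := (c1.and (c2.and (c3.and self_mem_nhdsWithin))).exists
  have hs4 : t < s := hs4
  refine ⟨s, hs4, hs3.le, ?_, hs1, ?_, hs2⟩ <;> nlinarith

lemma exists_seg {a b : ℝ} (ha : 0 < a) (hb : 0 < b) (i j : ℕ) {δ : ℝ} (hδ : 0 < δ) (hδ1 : δ < 1) :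
    ∃ p q : ℝ × ℝ, 0 < segLen p q ∧
      segLen p q ≤ Real.sqrt (((i + 2 * δ) * a) ^ 2 + ((j + 2 * δ) * b) ^ 2) ∧
      i + j + 3 ≤ visitCount a b p q := by
  -- choose a generic end point
  obtain ⟨η, hη, hgen⟩ : ∃ η ∈ Set.Ioo 0 δ, ∀ k ≤ i, ∀ l ≤ j,
      ((k : ℝ) + δ) * (j + δ + η) ≠ (l + δ) * (i + 2 * δ) := by
    have hinf : (Set.Ioo 0 δ).Infinite := Set.Ioo_infinite hδ
    let bad : ℕ × ℕ → ℝ := fun kl => (kl.2 + δ) * (i + 2 * δ) / (kl.1 + δ) - (j + δ)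
    have hfin : (bad '' ((Finset.range (i + 1) ×ˢ Finset.range (j + 1) : Finset (ℕ × ℕ)))).Finite :=
      (Finset.finite_toSet _).image _
    obtain ⟨η, h1, h2⟩ := hinf.exists_notMem_finite hfin
    refine ⟨η, h1, fun k hk l hl he => h2 ⟨(k, l), ?_, ?_⟩⟩
    · simp; omega
    · have : (k : ℝ) + δ ≠ 0 := by positivity
      simp only [bad]
      rw [← he]; field_simp; ring
  obtain ⟨hη0, hηδ⟩ := hη
  set I : ℝ := i + 2 * δ with hIdef
  set J : ℝ := j + δ + η with hJdef
  have hI : 0 < I := by positivity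
  have hJ : 0 < J := by positivity
  let p : ℝ × ℝ := (-δ * a, -δ * b)
  let q : ℝ × ℝ := ((-δ + I) * a, (-δ + J) * b)
  have hseg : segLen p q = Real.sqrt ((I * a) ^ 2 + (J * b) ^ 2) := by
    unfold segLen
    simp only [p, q]
    congr 1; ring
  have hvis : ∀ (k l : ℤ) (s : ℝ), 0 ≤ s → s ≤ 1 → (k : ℝ) < -δ + s * I → -δ + s * I < k + 1 →
      (l : ℝ) < -δ + s * J → -δ + s * J < l + 1 → (k, l) ∈ visSet a b p q := by
    intro k l s h0 h1 h2 h3 h4 h5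
    rw [mem_visSet]
    have e1 : p.1 + s * (q.1 - p.1) = (-δ + s * I) * a := by simp only [p, q]; ring
    have e2 : p.2 + s * (q.2 - p.2) = (-δ + s * J) * b := by simp only [p, q]; ring
    refine ⟨s, h0, h1, ?_⟩
    rw [e1, e2]
    exact ⟨mul_lt_mul_of_pos_right h2 ha, mul_lt_mul_of_pos_right h3 ha,
      mul_lt_mul_of_pos_right h4 hb, mul_lt_mul_of_pos_right h5 hb⟩
  let tx : ℕ → ℝ := fun k => (k + δ) / I
  let ty : ℕ → ℝ := fun l => (l + δ) / J
  have htx : ∀ k, tx k * I = k + δ := fun k => div_mul_cancel₀ _ hI.ne'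
  have hty : ∀ l, ty l * J = l + δ := fun l => div_mul_cancel₀ _ hJ.ne'
  have htx0 : ∀ k, 0 < tx k := fun k => by positivity
  have hty0 : ∀ k, 0 < ty k := fun k => by positivity
  have htx1 : ∀ k ≤ i, tx k < 1 := fun k hk => by
    have : (k : ℝ) ≤ i := by exact_mod_cast hk
    simp only [tx]; rw [div_lt_one hI]; linarith
  have hty1 : ∀ k ≤ j, ty k < 1 := fun k hk => by
    have : (k : ℝ) ≤ j := by exact_mod_cast hk
    simp only [ty]; rw [div_lt_one hJ]; linarith
  let G : Option (Fin (i + 1) ⊕ Fin (j + 1)) → ℤ × ℤ := fun o => match o with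
    | none => (-1, -1)
    | some (Sum.inl k) => ((k.val : ℤ), ⌊-δ + tx k.val * J⌋)
    | some (Sum.inr l) => (⌊-δ + ty l.val * I⌋, (l.val : ℤ))
  have hmix : ∀ (k : Fin (i + 1)) (l : Fin (j + 1)),
      G (some (Sum.inl k)) ≠ G (some (Sum.inr l)) := by
    intro k l he
    simp only [G, Prod.mk.injEq] at he
    obtain ⟨e1, e2⟩ := he
    have f1 := Int.floor_le (-δ + tx k.val * J)
    have f2 := Int.floor_le (-δ + ty l.val * I)
    rw [e2] at f1
    rw [← e1] at f2
    push_cast at f1 f2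
    have g1 : ty l.val ≤ tx k.val := by
      have := hty l.val
      by_contra hc
      push Not at hc
      nlinarith
    have g2 : tx k.val ≤ ty l.val := by
      have := htx k.val
      by_contra hc
      push Not at hc
      nlinarith
    have g3 := le_antisymm g1 g2
    apply hgen k.val (by omega) l.val (by omega)
    rw [← htx, ← hty, g3]
    ring
  have hinj : Function.Injective G := by
    rintro (_ | k | l) (_ | k' | l') he
    · rfl
    · simp only [G, Prod.mk.injEq] at he; omega
    · simp only [G, Prod.mk.injEq] at he; omega
    · simp only [G, Prod.mk.injEq] at he; omega
    · simp only [G, Prod.mk.injEq] at he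
      have : k = k' := by ext; omega
      rw [this]
    · exact absurd he (hmix _ _)
    · simp only [G, Prod.mk.injEq] at he; omega
    · exact absurd he.symm (hmix _ _)
    · simp only [G, Prod.mk.injEq] at he
      have : l = l' := by ext; omega
      rw [this]
  have hmem : ∀ o, G o ∈ visSet a b p q := by
    rintro (_ | k | l)
    · apply hvis (-1) (-1) 0 le_rfl zero_le_one <;> push_cast <;> linarith
    · have e := htx k.val
      obtain ⟨s, h0, h1, h2, h3, h4, h5⟩ := after_crossing (δ := δ) hI hJ
        (htx1 k.val (by omega)) (k.val : ℤ) ⌊-δ + tx k.val * J⌋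
        (by push_cast; linarith) (by push_cast; linarith) (Int.floor_le _) (Int.lt_floor_add_one _)
      exact hvis _ _ s ((htx0 _).le.trans h0.le) h1 h2 h3 h4 h5
    · have e := hty l.val
      obtain ⟨s, h0, h1, h2, h3, h4, h5⟩ := after_crossing (δ := δ) hI hJ
        (hty1 l.val (by omega)) ⌊-δ + ty l.val * I⌋ (l.val : ℤ)
        (Int.floor_le _) (Int.lt_floor_add_one _) (by push_cast; linarith) (by push_cast; linarith)
      exact hvis _ _ s ((hty0 _).le.trans h0.le) h1 h2 h3 h4 h5
  refine ⟨p, q, ?_, ?_, ?_⟩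
  · rw [hseg]; positivity
  · rw [hseg]
    apply Real.sqrt_le_sqrt
    have : J ≤ j + 2 * δ := by linarith
    gcongr
  · have h1 : (Set.range G) ⊆ visSet a b p q := by
      rintro _ ⟨o, rfl⟩; exact hmem o
    have h2 := Set.ncard_le_ncard h1 (visSet_bound ha hb p q).1
    rw [← Set.image_univ, Set.ncard_image_of_injective _ hinj, Set.ncard_univ] at h2
    rw [visitCount_eq]
    simp only [Nat.card_eq_fintype_card, Fintype.card_option, Fintype.card_sum,
      Fintype.card_fin] at h2
    omega

/-- The set whose infimum is `infLen`. -/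
def lenSet (a b : ℝ) (N : ℕ) : Set ℝ :=
  {ℓ : ℝ | 0 < ℓ ∧ ∃ p q : ℝ × ℝ, segLen p q = ℓ ∧ N ≤ visitCount a b p q}

lemma lenSet_bdd (a b : ℝ) (N : ℕ) : BddBelow (lenSet a b N) := ⟨0, fun _ h => h.1.le⟩

lemma infLen_eq (a b : ℝ) (N : ℕ) : infLen a b N = sInf (lenSet a b N) := rfl

lemma lenSet_nonempty {a b : ℝ} (ha : 0 < a) (hb : 0 < b) (N : ℕ) : (lenSet a b N).Nonempty := by
  obtain ⟨p, q, h0, -, h⟩ := exists_seg ha hb N 0 (δ := 1 / 2) (by norm_num) (by norm_num)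
  exact ⟨_, h0, p, q, rfl, by omega⟩

lemma infLen_nonneg (a b : ℝ) (N : ℕ) : 0 ≤ infLen a b N :=
  Real.sInf_nonneg fun _ h => h.1.le

lemma infLen_le {a b : ℝ} (ha : 0 < a) (hb : 0 < b) (i j : ℕ) :
    infLen a b (i + j + 3) ≤ fLen a b i j := by
  have hc : Continuous fun δ : ℝ =>
      Real.sqrt (((i + 2 * δ) * a) ^ 2 + ((j + 2 * δ) * b) ^ 2) := by fun_prop
  have ht := (hc.tendsto 0).mono_left (nhdsWithin_le_nhds (s := Set.Ioi 0))
  have he : fLen a b i j =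
      Real.sqrt (((i + 2 * (0 : ℝ)) * a) ^ 2 + ((j + 2 * (0 : ℝ)) * b) ^ 2) := by
    simp [fLen]
  rw [he]
  apply ge_of_tendsto ht
  have h1 : ∀ᶠ δ : ℝ in nhdsWithin 0 (Set.Ioi 0), δ < 1 :=
    nhdsWithin_le_nhds (Iio_mem_nhds one_pos)
  filter_upwards [h1, self_mem_nhdsWithin] with δ h1 h0
  obtain ⟨p, q, g0, g1, g2⟩ := exists_seg ha hb i j h0 h1
  exact (csInf_le (lenSet_bdd a b _) ⟨g0, p, q, rfl, g2⟩).trans g1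

lemma infLen_lt {a b : ℝ} (ha : 0 < a) (hb : 0 < b) (n : ℕ) :
    infLen a b (n + 3) < infLen a b (n + 4) := by
  obtain ⟨⟨i, j⟩, hij, hmin⟩ := Finset.exists_min_image (Finset.HasAntidiagonal.antidiagonal (n + 1))
    (fun v => fLen a b v.1 v.2) ⟨(0, n + 1), by simp⟩
  simp only [Finset.HasAntidiagonal.mem_antidiagonal] at hij hmin
  have h1 : fLen a b i j ≤ infLen a b (n + 4) := by
    apply le_csInf (lenSet_nonempty ha hb _)
    rintro _ ⟨-, p, q, rfl, h⟩
    obtain ⟨i', j', e, h'⟩ := fLen_le ha hb (N := n + 1) h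
    exact (hmin (i', j') e).trans h'
  refine lt_of_lt_of_le ?_ h1
  rcases i with _ | i
  · rcases j with _ | j
    · omega
    · have : n + 3 = 0 + j + 3 := by omega
      rw [this]
      refine (infLen_le ha hb 0 j).trans_lt ?_
      unfold fLen
      apply Real.sqrt_lt_sqrt (by positivity)
      push_cast
      gcongr
      linarith
  · have : n + 3 = i + j + 3 := by omega
    rw [this]
    refine (infLen_le ha hb i j).trans_lt ?_
    unfold fLen
    apply Real.sqrt_lt_sqrt (by positivity)
    push_cast
    gcongr
    linarith

/-- A segment can be shortened without losing visited tiles. -/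
lemma shrink {a b : ℝ} (ha : 0 < a) (hb : 0 < b) (p q : ℝ × ℝ) (h : 0 < segLen p q) :
    ∃ q', 0 < segLen p q' ∧ segLen p q' < segLen p q ∧
      visitCount a b p q ≤ visitCount a b p q' := by
  have hfin := (visSet_bound ha hb p q).1
  have hev : ∀ᶠ s in nhdsWithin (1 : ℝ) (Set.Iio 1), ∀ v ∈ visSet a b p q,
      v ∈ visSet a b p (p.1 + s * (q.1 - p.1), p.2 + s * (q.2 - p.2)) := by
    rw [Filter.eventually_all_finite hfin]
    intro v hv
    obtain ⟨t, h0, h1, h2, h3, h4, h5⟩ := (mem_visSet _ _ _ _ _).1 hv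
    apply nhdsWithin_le_nhds
    have c1 := (by fun_prop : Continuous fun s : ℝ =>
      p.1 + t * (p.1 + s * (q.1 - p.1) - p.1)).tendsto 1
    have c2 := (by fun_prop : Continuous fun s : ℝ =>
      p.2 + t * (p.2 + s * (q.2 - p.2) - p.2)).tendsto 1
    filter_upwards [c1.eventually_const_lt (u := (v.1 : ℝ) * a) (by linarith),
      c1.eventually_lt_const (u := ((v.1 : ℝ) + 1) * a) (by linarith),
      c2.eventually_const_lt (u := (v.2 : ℝ) * b) (by linarith),
      c2.eventually_lt_const (u := ((v.2 : ℝ) + 1) * b) (by linarith)] with s g1 g2 g3 g4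
    exact (mem_visSet _ _ _ _ _).2 ⟨t, h0, h1, g1, g2, g3, g4⟩
  have hpos : ∀ᶠ s in nhdsWithin (1 : ℝ) (Set.Iio 1), 0 < s :=
    nhdsWithin_le_nhds (Ioi_mem_nhds one_pos)
  obtain ⟨s, hs, hs0, hs1⟩ := (hev.and (hpos.and self_mem_nhdsWithin)).exists
  have hs1 : s < 1 := hs1
  refine ⟨_, ?_, ?_, Set.ncard_le_ncard hs (visSet_bound ha hb _ _).1⟩
  · rw [segLen_scale _ _ _ hs0.le]; positivity
  · rw [segLen_scale _ _ _ hs0.le]; nlinarith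

lemma extend {a b : ℝ} (ha : 0 < a) (hb : 0 < b) (p q : ℝ × ℝ) (h : 0 < segLen p q) {ℓ : ℝ}
    (hl : segLen p q ≤ ℓ) :
    ∃ q', segLen p q' = ℓ ∧ visitCount a b p q ≤ visitCount a b p q' := by
  have hc : 1 ≤ ℓ / segLen p q := (one_le_div h).2 hl
  set c := ℓ / segLen p q with hcdef
  have hc0 : 0 < c := by linarith
  refine ⟨(p.1 + c * (q.1 - p.1), p.2 + c * (q.2 - p.2)), ?_,
    Set.ncard_le_ncard ?_ (visSet_bound ha hb _ _).1⟩
  · rw [segLen_scale _ _ _ hc0.le]; exact div_mul_cancel₀ _ h.ne'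
  · intro v hv
    obtain ⟨t, h0, h1, h2⟩ := (mem_visSet _ _ _ _ _).1 hv
    refine (mem_visSet _ _ _ _ _).2 ⟨t / c, by positivity, ?_, ?_⟩
    · rw [div_le_one hc0]; linarith
    · simp only [add_sub_cancel_left]
      rw [← mul_assoc, ← mul_assoc, div_mul_cancel₀ _ hc0.ne']
      exact h2

lemma maxSet_bdd {a b : ℝ} (ha : 0 < a) (hb : 0 < b) (ℓ : ℝ) :
    BddAbove {n : ℕ | ∃ p q : ℝ × ℝ, segLen p q = ℓ ∧ visitCount a b p q = n} := by
  refine ⟨⌊ℓ / a⌋₊ + ⌊ℓ / b⌋₊ + 3, ?_⟩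
  rintro _ ⟨p, q, rfl, rfl⟩
  refine (visSet_bound ha hb p q).2.trans ?_
  have h1 : |q.1 - p.1| ≤ segLen p q := by
    rw [abs_sub_comm]; apply Real.abs_le_sqrt; nlinarith [sq_nonneg (p.2 - q.2)]
  have h2 : |q.2 - p.2| ≤ segLen p q := by
    rw [abs_sub_comm]; apply Real.abs_le_sqrt; nlinarith [sq_nonneg (p.1 - q.1)]
  gcongr

lemma le_maxTiles_iff {a b : ℝ} (ha : 0 < a) (hb : 0 < b) {ℓ : ℝ} (hl : 0 < ℓ) {N : ℕ}
    (hN : 1 ≤ N) : N ≤ maxTiles a b ℓ ↔ infLen a b N < ℓ := by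
  constructor
  · intro h
    by_contra hc
    push Not at hc
    have : maxTiles a b ℓ ≤ N - 1 := by
      apply csSup_le'
      rintro _ ⟨p, q, hpq, rfl⟩
      by_contra hcon
      obtain ⟨q', h0, h1, h2⟩ := shrink ha hb p q (by rw [hpq]; exact hl)
      have := csInf_le (lenSet_bdd a b N) ⟨h0, p, q', rfl, by omega⟩
      rw [← infLen_eq] at this
      linarith
    omega
  · intro h
    obtain ⟨_, ⟨h0, p, q, rfl, h1⟩, h2⟩ := exists_lt_of_csInf_lt (lenSet_nonempty ha hb N) h
    obtain ⟨q', h3, h4⟩ := extend ha hb p q h0 h2.le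
    exact (h1.trans h4).trans (le_csSup (maxSet_bdd ha hb ℓ) ⟨p, q', h3, rfl⟩)

theorem stmt_8 (a b : ℝ) (hb : 0 < b) (hab : b ≤ a) (N : ℕ) (hN : 4 ≤ N) :
    maxTiles a b (infLen a b N) = N - 1 ∧
    (∃ ε > (0 : ℝ), ∀ ℓ : ℝ, infLen a b N < ℓ → ℓ ≤ infLen a b N + ε →
      maxTiles a b ℓ = N) ∧
    (∀ ℓ : ℝ, 0 < ℓ → ¬ContinuousAt (fun x : ℝ => (maxTiles a b x : ℝ)) ℓ →
      ∃ N' : ℕ, 4 ≤ N' ∧ ℓ = infLen a b N') := by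
  have ha : 0 < a := hb.trans_le hab
  obtain ⟨n, rfl⟩ : ∃ n, N = n + 4 := ⟨N - 4, by omega⟩
  have h1 := infLen_lt ha hb n
  have h2 := infLen_lt ha hb (n + 1)
  have hp : 0 < infLen a b (n + 4) := (infLen_nonneg a b _).trans_lt h1
  refine ⟨?_, ⟨infLen a b (n + 5) - infLen a b (n + 4), by linarith, ?_⟩, ?_⟩
  · have e1 := (le_maxTiles_iff ha hb hp (N := n + 3) (by omega)).2 h1
    have e2 := mt (le_maxTiles_iff ha hb hp (N := n + 4) (by omega)).1 (lt_irrefl _)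
    omega
  · intro ℓ g1 g2
    have hl : 0 < ℓ := hp.trans g1
    have e1 := (le_maxTiles_iff ha hb hl (N := n + 4) (by omega)).2 g1
    have e2 := mt (le_maxTiles_iff ha hb hl (N := n + 5) (by omega)).1 (by linarith)
    omega
  · intro ℓ hl hnc
    by_contra hcon
    push Not at hcon
    apply hnc
    have z : infLen a b 3 = 0 := by
      apply le_antisymm _ (infLen_nonneg a b 3)
      simpa [fLen] using infLen_le ha hb 0 0
    have e3 : 3 ≤ maxTiles a b ℓ := by
      rw [le_maxTiles_iff ha hb hl (by omega), z]; exact hl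
    set m := maxTiles a b ℓ with hm
    have e1 : infLen a b m < ℓ := (le_maxTiles_iff ha hb hl (by omega)).1 hm.le
    have e2 : ℓ < infLen a b (m + 1) := by
      refine lt_of_le_of_ne ?_ (hcon (m + 1) (by omega))
      by_contra hc
      push Not at hc
      have := (le_maxTiles_iff ha hb hl (N := m + 1) (by omega)).2 hc
      omega
    have hev : ∀ᶠ x in nhds ℓ, (m : ℝ) = (maxTiles a b x : ℝ) := by
      filter_upwards [Ioo_mem_nhds e1 e2] with x hx
      have hx0 : 0 < x := (infLen_nonneg a b m).trans_lt hx.1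
      have f1 := (le_maxTiles_iff ha hb hx0 (N := m) (by omega)).2 hx.1
      have f2 := mt (le_maxTiles_iff ha hb hx0 (N := m + 1) (by omega)).1 (by linarith [hx.2])
      congr 1
      omega
    exact continuousAt_const.congr hev
end

section
/- For the unit square grid (a = b = 1), let ℓ > 0. For every odd integer N ≥ 3: M(ℓ) = N if and only if (N−3)/√2 < ℓ ≤ √((N−3)² + (N−1)²)/2. For every even integer N ≥ 4: M(ℓ) = N if and only if √((N−4)² + (N−2)²)/2 < ℓ ≤ (N−2)/√2. -/
open Set

/-- Tiles visited by the segment from `p` to `q` in the unit grid. -/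
def visited (p q : ℝ × ℝ) : Set (ℤ × ℤ) :=
  {kl : ℤ × ℤ | (segment ℝ p q ∩ tileInt 1 1 kl.1 kl.2).Nonempty}

lemma mem_visited {p q : ℝ × ℝ} {kl : ℤ × ℤ} : kl ∈ visited p q ↔
    ∃ t : ℝ, 0 ≤ t ∧ t ≤ 1 ∧ (kl.1 : ℝ) < p.1 + t * (q.1 - p.1) ∧
      p.1 + t * (q.1 - p.1) < kl.1 + 1 ∧ (kl.2 : ℝ) < p.2 + t * (q.2 - p.2) ∧
      p.2 + t * (q.2 - p.2) < kl.2 + 1 := by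
  unfold visited tileInt
  rw [segment_eq_image']
  constructor
  · rintro ⟨x, ⟨t, ⟨h0, h1⟩, rfl⟩, hx⟩
    simp only [Set.mem_prod, Set.mem_Ioo, mul_one, Prod.fst_add, Prod.snd_add, Prod.smul_fst,
      Prod.smul_snd, Prod.fst_sub, Prod.snd_sub, smul_eq_mul] at hx
    exact ⟨t, h0, h1, hx.1.1, hx.1.2, hx.2.1, hx.2.2⟩
  · rintro ⟨t, h0, h1, h2, h3, h4, h5⟩
    refine ⟨_, ⟨t, ⟨h0, h1⟩, rfl⟩, ?_⟩
    simp only [Set.mem_prod, Set.mem_Ioo, mul_one, Prod.fst_add, Prod.snd_add, Prod.smul_fst,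
      Prod.smul_snd, Prod.fst_sub, Prod.snd_sub, smul_eq_mul]
    exact ⟨⟨h2, h3⟩, h4, h5⟩

lemma bound_aux {x y t : ℝ} (h0 : 0 ≤ t) (h1 : t ≤ 1) {k : ℤ}
    (h2 : (k : ℝ) < x + t * (y - x)) (h3 : x + t * (y - x) < k + 1) :
    k ∈ Set.Icc (⌊min x y⌋ - 1) ⌈max x y⌉ := by
  have a1 := min_le_left x y
  have a2 := min_le_right x y
  have a3 := le_max_left x y
  have a4 := le_max_right x y
  have a5 := Int.floor_le (min x y)
  have a6 := Int.le_ceil (max x y)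
  have b1 : min x y ≤ x + t * (y - x) := by nlinarith
  have b2 : x + t * (y - x) ≤ max x y := by nlinarith
  constructor
  · have : ((⌊min x y⌋ - 1 : ℤ) : ℝ) < (k : ℝ) := by push_cast; linarith
    exact (Int.cast_lt.mp this).le
  · have : (k : ℝ) < (⌈max x y⌉ : ℤ) := by linarith
    exact (Int.cast_lt.mp this).le

lemma visited_finite (p q : ℝ × ℝ) : (visited p q).Finite := by
  apply Set.Finite.subset ((Set.finite_Icc (⌊min p.1 q.1⌋ - 1) ⌈max p.1 q.1⌉).prod
    (Set.finite_Icc (⌊min p.2 q.2⌋ - 1) ⌈max p.2 q.2⌉))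
  intro kl h
  obtain ⟨t, h0, h1, h2, h3, h4, h5⟩ := mem_visited.mp h
  exact ⟨bound_aux h0 h1 h2 h3, bound_aux h0 h1 h4 h5⟩

/-- Spread bound for one coordinate. -/
lemma spread {x y t t' : ℝ} (h0 : 0 ≤ t) (h1 : t ≤ 1) (h0' : 0 ≤ t') (h1' : t' ≤ 1) {k k' : ℤ}
    (h3 : x + t * (y - x) < k + 1) (h2 : (k' : ℝ) < x + t' * (y - x)) :
    ((k' - k : ℤ) : ℝ) - 1 < |x - y| := by
  push_cast
  rcases le_total x y with h | h
  · rw [abs_of_nonpos (by linarith)]; nlinarith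
  · rw [abs_of_nonneg (by linarith)]; nlinarith

/-- Monotonicity for one coordinate. -/
lemma mono_aux {x y t t' : ℝ} (ht : t ≤ t') (hxy : x ≤ y) {k k' : ℤ}
    (h2 : (k : ℝ) < x + t * (y - x)) (h3 : x + t' * (y - x) < k' + 1) : k ≤ k' := by
  have : (k : ℝ) < ((k' + 1 : ℤ) : ℝ) := by push_cast; nlinarith
  have := Int.cast_lt.mp this
  omega

lemma anti_aux {x y t t' : ℝ} (ht : t ≤ t') (hxy : y ≤ x) {k k' : ℤ}
    (h2 : (k' : ℝ) < x + t' * (y - x)) (h3 : x + t * (y - x) < k + 1) : k' ≤ k := by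
  have : (k' : ℝ) < ((k + 1 : ℤ) : ℝ) := by push_cast; nlinarith
  have := Int.cast_lt.mp this
  omega

/-- A finite set of integers with `n + 1` elements has spread at least `n`. -/
lemma card_spread (S : Finset (ℤ × ℤ)) (hS : S.Nonempty) (f : ℤ × ℤ → ℤ)
    (hf : Set.InjOn f S) : ∃ u ∈ S, ∃ v ∈ S, (S.card : ℤ) - 1 ≤ f v - f u ∧ f u ≤ f v := by
  obtain ⟨u, hu, hu'⟩ := S.exists_min_image f hS
  obtain ⟨v, hv, hv'⟩ := S.exists_max_image f hS
  refine ⟨u, hu, v, hv, ?_, hu' v hv⟩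
  have h : S.card ≤ (Finset.Icc (f u) (f v)).card := by
    apply Finset.card_le_card_of_injOn f _ hf
    intro x hx
    simp only [Finset.coe_Icc, Set.mem_Icc]
    exact ⟨hu' x hx, hv' x hx⟩
  rw [Int.card_Icc] at h
  have := hu' v hv
  omega

lemma upper_of_le (p q : ℝ × ℝ) (hx : p.1 ≤ q.1) (h : 1 ≤ (visited p q).ncard) :
    ∃ a b : ℤ, 0 ≤ a ∧ 0 ≤ b ∧ ((visited p q).ncard : ℤ) - 1 ≤ a + b ∧
      (a : ℝ) - 1 < |p.1 - q.1| ∧ (b : ℝ) - 1 < |p.2 - q.2| := by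
  have hfin := visited_finite p q
  rw [Set.ncard_eq_toFinset_card _ hfin] at h ⊢
  have hne : hfin.toFinset.Nonempty := Finset.card_pos.mp h
  rcases le_total p.2 q.2 with hy | hy
  · have hch : ∀ u ∈ visited p q, ∀ v ∈ visited p q,
        (u.1 ≤ v.1 ∧ u.2 ≤ v.2) ∨ (v.1 ≤ u.1 ∧ v.2 ≤ u.2) := by
      intro u hu v hv
      obtain ⟨t, h0, h1, h2, h3, h4, h5⟩ := mem_visited.mp hu
      obtain ⟨t', h0', h1', h2', h3', h4', h5'⟩ := mem_visited.mp hv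
      rcases le_total t t' with ht | ht
      · exact Or.inl ⟨mono_aux ht hx h2 h3', mono_aux ht hy h4 h5'⟩
      · exact Or.inr ⟨mono_aux ht hx h2' h3, mono_aux ht hy h4' h5⟩
    obtain ⟨u, hu, v, hv, hc, huv⟩ := card_spread hfin.toFinset hne (fun z => z.1 + z.2) (by
      intro u hu v hv huv
      simp only [Set.Finite.coe_toFinset] at hu hv huv
      have := hch u hu v hv
      ext <;> omega)
    rw [Set.Finite.mem_toFinset] at hu hv
    have hc2 := hch u hu v hv
    obtain ⟨t, h0, h1, h2, h3, h4, h5⟩ := mem_visited.mp hu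
    obtain ⟨t', h0', h1', h2', h3', h4', h5'⟩ := mem_visited.mp hv
    exact ⟨v.1 - u.1, v.2 - u.2, by omega, by omega, by omega,
      spread h0 h1 h0' h1' h3 h2', spread h0 h1 h0' h1' h5 h4'⟩
  · have hch : ∀ u ∈ visited p q, ∀ v ∈ visited p q,
        (u.1 ≤ v.1 ∧ v.2 ≤ u.2) ∨ (v.1 ≤ u.1 ∧ u.2 ≤ v.2) := by
      intro u hu v hv
      obtain ⟨t, h0, h1, h2, h3, h4, h5⟩ := mem_visited.mp hu
      obtain ⟨t', h0', h1', h2', h3', h4', h5'⟩ := mem_visited.mp hv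
      rcases le_total t t' with ht | ht
      · exact Or.inl ⟨mono_aux ht hx h2 h3', anti_aux ht hy h4' h5⟩
      · exact Or.inr ⟨mono_aux ht hx h2' h3, anti_aux ht hy h4 h5'⟩
    obtain ⟨u, hu, v, hv, hc, huv⟩ := card_spread hfin.toFinset hne (fun z => z.1 - z.2) (by
      intro u hu v hv huv
      simp only [Set.Finite.coe_toFinset] at hu hv huv
      have := hch u hu v hv
      ext <;> omega)
    rw [Set.Finite.mem_toFinset] at hu hv
    have hc2 := hch u hu v hv
    obtain ⟨t, h0, h1, h2, h3, h4, h5⟩ := mem_visited.mp hu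
    obtain ⟨t', h0', h1', h2', h3', h4', h5'⟩ := mem_visited.mp hv
    exact ⟨v.1 - u.1, u.2 - v.2, by omega, by omega, by omega,
      spread h0 h1 h0' h1' h3 h2', spread h0' h1' h0 h1 h5' h4⟩

lemma upper (p q : ℝ × ℝ) (h : 1 ≤ visitCount 1 1 p q) :
    ∃ a b : ℤ, 0 ≤ a ∧ 0 ≤ b ∧ (visitCount 1 1 p q : ℤ) - 1 ≤ a + b ∧
      (a : ℝ) - 1 < |p.1 - q.1| ∧ (b : ℝ) - 1 < |p.2 - q.2| := by
  change 1 ≤ (visited p q).ncard at h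
  change ∃ a b : ℤ, 0 ≤ a ∧ 0 ≤ b ∧ ((visited p q).ncard : ℤ) - 1 ≤ a + b ∧ _
  rcases le_total p.1 q.1 with hx | hx
  · exact upper_of_le p q hx h
  · have e : visited p q = visited q p := by unfold visited; rw [segment_symm]
    rw [e] at h ⊢
    rw [abs_sub_comm p.1, abs_sub_comm p.2]
    exact upper_of_le q p hx h

lemma pow_le_pow_left_aux {a b : ℝ} (h : a ^ 2 ≤ b ^ 2) (hb : 0 ≤ b) : a ≤ b :=
  (le_abs_self a).trans (abs_le_of_sq_le_sq h hb)

lemma segLen_sq (p q : ℝ × ℝ) : segLen p q ^ 2 = |p.1 - q.1| ^ 2 + |p.2 - q.2| ^ 2 := by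
  unfold segLen
  rw [Real.sq_sqrt (by positivity), sq_abs, sq_abs]

lemma segLen_nonneg (p q : ℝ × ℝ) : 0 ≤ segLen p q := Real.sqrt_nonneg _

lemma bdd (ℓ : ℝ) : BddAbove {n : ℕ | ∃ p q : ℝ × ℝ, segLen p q = ℓ ∧ visitCount 1 1 p q = n} := by
  refine ⟨⌈2 * ℓ + 3⌉₊, ?_⟩
  rintro n ⟨p, q, hl, rfl⟩
  rcases Nat.eq_zero_or_pos (visitCount 1 1 p q) with h | h
  · omega
  obtain ⟨a, b, ha, hb, hab, h1, h2⟩ := upper p q h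
  have hs := segLen_sq p q
  have hn := segLen_nonneg p q
  rw [hl] at hs hn
  have e1 : |p.1 - q.1| ≤ ℓ := pow_le_pow_left_aux (by nlinarith [sq_nonneg |p.2 - q.2|]) hn
  have e2 : |p.2 - q.2| ≤ ℓ := pow_le_pow_left_aux (by nlinarith [sq_nonneg |p.1 - q.1|]) hn
  have hab' : ((visitCount 1 1 p q : ℕ) : ℝ) - 1 ≤ a + b := by exact_mod_cast hab
  have := Nat.le_ceil (2 * ℓ + 3)
  have h3 : ((visitCount 1 1 p q : ℕ) : ℝ) ≤ (⌈2 * ℓ + 3⌉₊ : ℕ) := by linarith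
  exact_mod_cast h3

lemma exists_of_le {ℓ : ℝ} (hℓ : 0 < ℓ) {N : ℕ} (h : N ≤ maxTiles 1 1 ℓ) :
    ∃ p q : ℝ × ℝ, segLen p q = ℓ ∧ N ≤ visitCount 1 1 p q := by
  have hne : {n : ℕ | ∃ p q : ℝ × ℝ, segLen p q = ℓ ∧ visitCount 1 1 p q = n}.Nonempty := by
    refine ⟨_, (0, 0), (ℓ, 0), ?_, rfl⟩
    unfold segLen
    simp [Real.sqrt_sq hℓ.le]
  obtain ⟨p, q, h1, h2⟩ := Nat.sSup_mem hne (bdd ℓ)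
  refine ⟨p, q, h1, ?_⟩
  rw [h2]
  exact h

/-- The `n`-th tile of the staircase. -/
def stair (n : ℕ) : ℤ × ℤ := ((n : ℤ) / 2 - 1, ((n : ℤ) + 1) / 2 - 1)

lemma le_of_stair {ℓ : ℝ} {N : ℕ} (p q : ℝ × ℝ) (h0 : 0 < segLen p q) (hl : segLen p q ≤ ℓ)
    (h : ∀ n < N, stair n ∈ visited p q) : N ≤ maxTiles 1 1 ℓ := by
  set r := ℓ / segLen p q with hr
  have hr1 : 1 ≤ r := by rw [hr, le_div_iff₀ h0]; linarith
  have hr0 : 0 < r := by linarith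
  set q' : ℝ × ℝ := (p.1 + r * (q.1 - p.1), p.2 + r * (q.2 - p.2)) with hq'
  have hlen : segLen p q' = ℓ := by
    have h2 : segLen p q' = r * segLen p q := by
      unfold segLen
      rw [← Real.sqrt_sq hr0.le, ← Real.sqrt_mul (sq_nonneg _)]
      congr 1
      simp only [hq']
      ring
    rw [h2, hr]
    field_simp
  have hsub : visited p q ⊆ visited p q' := by
    intro kl hk
    obtain ⟨t, h0, h1, h2, h3, h4, h5⟩ := mem_visited.mp hk
    refine mem_visited.mpr ⟨t / r, by positivity, ?_, ?_⟩
    · rw [div_le_one hr0]; linarith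
    · have e1 : t / r * (q'.1 - p.1) = t * (q.1 - p.1) := by simp only [hq']; field_simp; ring
      have e2 : t / r * (q'.2 - p.2) = t * (q.2 - p.2) := by simp only [hq']; field_simp; ring
      rw [e1, e2]
      exact ⟨h2, h3, h4, h5⟩
  have hcount : N ≤ visitCount 1 1 p q' := by
    change N ≤ (visited p q').ncard
    have hfin := visited_finite p q'
    rw [Set.ncard_eq_toFinset_card _ hfin]
    conv_lhs => rw [← Finset.card_range N]
    apply Finset.card_le_card_of_injOn stair
    · intro n hn
      simp only [Finset.coe_range, Set.mem_Iio] at hn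
      simp only [Set.Finite.coe_toFinset]
      exact hsub (h n hn)
    · intro a _ b _ hab
      simp only [stair, Prod.mk.injEq] at hab
      omega
  exact hcount.trans (le_csSup (bdd ℓ) ⟨p, q', hlen, rfl⟩)

lemma odd_le {ℓ : ℝ} (hℓ : 0 < ℓ) (m : ℕ) (h : 2 * (m : ℝ) ^ 2 < ℓ ^ 2) :
    2 * m + 3 ≤ maxTiles 1 1 ℓ := by
  obtain ⟨e, he0, he1, he2⟩ : ∃ e : ℝ, 0 < e ∧ e ≤ 1 / 4 ∧ 2 * ((m : ℝ) + 3 * e) ^ 2 ≤ ℓ ^ 2 := by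
    have hm : (0 : ℝ) ≤ m := Nat.cast_nonneg m
    have hD : 0 < 12 * (m : ℝ) + 18 := by positivity
    refine ⟨min (1 / 4) ((ℓ ^ 2 - 2 * (m : ℝ) ^ 2) / (12 * m + 18)),
      lt_min (by norm_num) (div_pos (by linarith) hD), min_le_left _ _, ?_⟩
    set e := min (1 / 4) ((ℓ ^ 2 - 2 * (m : ℝ) ^ 2) / (12 * m + 18)) with he
    have h1 : e ≤ 1 / 4 := min_le_left _ _
    have h2 : e ≤ (ℓ ^ 2 - 2 * (m : ℝ) ^ 2) / (12 * m + 18) := min_le_right _ _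
    have h3 : 0 < e := lt_min (by norm_num) (div_pos (by linarith) hD)
    rw [le_div_iff₀ hD] at h2
    nlinarith
  have hm : (0 : ℝ) ≤ m := Nat.cast_nonneg m
  have hs : segLen (-2 * e, -e) ((m : ℝ) + e, (m : ℝ) + 2 * e) ^ 2 = 2 * ((m : ℝ) + 3 * e) ^ 2 := by
    rw [segLen_sq, sq_abs, sq_abs]; ring
  have hn := segLen_nonneg (-2 * e, -e) ((m : ℝ) + e, (m : ℝ) + 2 * e)
  refine le_of_stair (-2 * e, -e) ((m : ℝ) + e, (m : ℝ) + 2 * e) ?_ ?_ ?_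
  · rcases hn.lt_or_eq with h | h
    · exact h
    · rw [← h] at hs; nlinarith
  · rw [← hs] at he2
    exact pow_le_pow_left_aux he2 hℓ.le
  · -- every point of the line `y = x + e` with the right abscissa
    have key : ∀ (kl : ℤ × ℤ) (x : ℝ), -2 * e ≤ x → x ≤ m + e → (kl.1 : ℝ) < x → x < kl.1 + 1 →
        (kl.2 : ℝ) < x + e → x + e < kl.2 + 1 →
        kl ∈ visited (-2 * e, -e) ((m : ℝ) + e, (m : ℝ) + 2 * e) := by
      intro kl x a1 a2 a3 a4 a5 a6
      have hu : 0 < (m : ℝ) + 3 * e := by positivity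
      refine mem_visited.mpr ⟨(x + 2 * e) / (m + 3 * e), div_nonneg (by linarith) hu.le, ?_, ?_⟩
      · rw [div_le_one hu]; linarith
      · have e1 : (x + 2 * e) / (m + 3 * e) * ((m : ℝ) + e - -2 * e) = x + 2 * e := by
          field_simp; ring
        have e2 : (x + 2 * e) / (m + 3 * e) * ((m : ℝ) + 2 * e - -e) = x + 2 * e := by
          field_simp; ring
        simp only [e1, e2]
        refine ⟨?_, ?_, ?_, ?_⟩ <;> linarith
    intro n hn
    rcases Nat.even_or_odd' n with ⟨k, rfl | rfl⟩
    · rcases Nat.eq_zero_or_pos k with rfl | hk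
      · apply key _ (-2 * e) <;> norm_num [stair] <;> linarith
      · obtain ⟨j, rfl⟩ : ∃ j, k = j + 1 := ⟨k - 1, by omega⟩
        have hj : (j : ℝ) ≤ m := by exact_mod_cast (by omega : j ≤ m)
        have hj0 : (0 : ℝ) ≤ j := Nat.cast_nonneg j
        have es : stair (2 * (j + 1)) = ((j : ℤ), (j : ℤ)) := by
          simp only [stair, Prod.mk.injEq]; push_cast; omega
        rw [es]
        apply key _ (j + e / 2) <;> (try simp only [Int.cast_natCast]) <;> linarith
    · have hj : (k : ℝ) ≤ m := by exact_mod_cast (by omega : k ≤ m)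
      have hj0 : (0 : ℝ) ≤ k := Nat.cast_nonneg k
      have es : stair (2 * k + 1) = ((k : ℤ) - 1, (k : ℤ)) := by
        simp only [stair, Prod.mk.injEq]; push_cast; omega
      rw [es]
      apply key _ (k - e / 2) <;> push_cast <;> linarith

lemma even_le {ℓ : ℝ} (hℓ : 0 < ℓ) (m : ℕ) (h : (m : ℝ) ^ 2 + ((m : ℝ) + 1) ^ 2 < ℓ ^ 2) :
    2 * m + 4 ≤ maxTiles 1 1 ℓ := by
  obtain ⟨w, hw0, hw1, hw2⟩ : ∃ w : ℝ, 0 < w ∧ w ≤ 1 / 4 ∧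
      ((m : ℝ) + 2 * w) ^ 2 + ((m : ℝ) + 2 * w + 1) ^ 2 ≤ ℓ ^ 2 := by
    have hm : (0 : ℝ) ≤ m := Nat.cast_nonneg m
    have hD : 0 < 8 * (m : ℝ) + 12 := by positivity
    have hd : 0 < (ℓ ^ 2 - ((m : ℝ) ^ 2 + ((m : ℝ) + 1) ^ 2)) / (8 * m + 12) :=
      div_pos (by linarith) hD
    refine ⟨min (1 / 4) ((ℓ ^ 2 - ((m : ℝ) ^ 2 + ((m : ℝ) + 1) ^ 2)) / (8 * m + 12)),
      lt_min (by norm_num) hd, min_le_left _ _, ?_⟩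
    set w := min (1 / 4) ((ℓ ^ 2 - ((m : ℝ) ^ 2 + ((m : ℝ) + 1) ^ 2)) / (8 * m + 12)) with hw
    have h1 : w ≤ 1 / 4 := min_le_left _ _
    have h2 : w ≤ (ℓ ^ 2 - ((m : ℝ) ^ 2 + ((m : ℝ) + 1) ^ 2)) / (8 * m + 12) := min_le_right _ _
    have h3 : 0 < w := lt_min (by norm_num) hd
    rw [le_div_iff₀ hD] at h2
    nlinarith
  have hm : (0 : ℝ) ≤ m := Nat.cast_nonneg m
  have hs : segLen (-w, -w) ((m : ℝ) + w, (m : ℝ) + 1 + w) ^ 2 =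
      ((m : ℝ) + 2 * w) ^ 2 + ((m : ℝ) + 2 * w + 1) ^ 2 := by
    rw [segLen_sq, sq_abs, sq_abs]; ring
  have hn := segLen_nonneg (-w, -w) ((m : ℝ) + w, (m : ℝ) + 1 + w)
  refine le_of_stair (-w, -w) ((m : ℝ) + w, (m : ℝ) + 1 + w) ?_ ?_ ?_
  · rcases hn.lt_or_eq with h | h
    · exact h
    · rw [← h] at hs; nlinarith
  · rw [← hs] at hw2
    exact pow_le_pow_left_aux hw2 hℓ.le
  · set u : ℝ := (m : ℝ) + 2 * w with hu
    have hu0 : 0 < u := by positivity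
    have key : ∀ (kl : ℤ × ℤ) (x : ℝ), -w ≤ x → x ≤ m + w → (kl.1 : ℝ) < x → x < kl.1 + 1 →
        (kl.2 : ℝ) < x + (x + w) / u → x + (x + w) / u < kl.2 + 1 →
        kl ∈ visited (-w, -w) ((m : ℝ) + w, (m : ℝ) + 1 + w) := by
      intro kl x a1 a2 a3 a4 a5 a6
      refine mem_visited.mpr ⟨(x + w) / u, div_nonneg (by linarith) hu0.le, ?_, ?_⟩
      · rw [div_le_one hu0]; linarith
      · have e1 : (x + w) / u * ((m : ℝ) + w - -w) = x + w := by
          rw [show (m : ℝ) + w - -w = u by rw [hu]; ring]; field_simp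
        have e2 : (x + w) / u * ((m : ℝ) + 1 + w - -w) = x + w + (x + w) / u := by
          rw [show (m : ℝ) + 1 + w - -w = u + 1 by rw [hu]; ring]; field_simp
        simp only [e1, e2]
        refine ⟨?_, ?_, ?_, ?_⟩ <;> linarith
    -- the small offset
    set e : ℝ := w / (2 * (u + 1)) with he
    have he0 : 0 < e := by positivity
    have heq : e * (2 * (u + 1)) = w := by rw [he]; field_simp
    have hew : e ≤ w / 2 := by nlinarith
    intro n hn
    rcases Nat.even_or_odd' n with ⟨k, rfl | rfl⟩
    · rcases Nat.eq_zero_or_pos k with rfl | hk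
      · apply key _ (-w) <;> norm_num [stair] <;> linarith
      · obtain ⟨j, rfl⟩ : ∃ j, k = j + 1 := ⟨k - 1, by omega⟩
        have hj : (j : ℝ) ≤ m := by exact_mod_cast (by omega : j ≤ m)
        have hj0 : (0 : ℝ) ≤ j := Nat.cast_nonneg j
        have es : stair (2 * (j + 1)) = ((j : ℤ), (j : ℤ)) := by
          simp only [stair, Prod.mk.injEq]; push_cast; omega
        rw [es]
        have hA : 0 < ((j : ℝ) + e + w) / u := by positivity
        have hB : e + ((j : ℝ) + e + w) / u < 1 := by
          rw [← lt_sub_iff_add_lt', div_lt_iff₀ hu0]; nlinarith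
        apply key _ (j + e) <;> (try simp only [Int.cast_natCast]) <;> linarith
    · rcases Nat.lt_or_ge m k with hk | hk
      · obtain rfl : k = m + 1 := by omega
        have es : stair (2 * (m + 1) + 1) = ((m : ℤ), (m : ℤ) + 1) := by
          simp only [stair, Prod.mk.injEq]; push_cast; omega
        rw [es]
        have hA : ((m : ℝ) + w + w) / u = 1 := by
          rw [div_eq_one_iff_eq hu0.ne']; rw [hu]; ring
        apply key _ (m + w) <;> (try rw [hA]) <;> push_cast <;> linarith
      · have hj : (k : ℝ) ≤ m := by exact_mod_cast hk
        have hj0 : (0 : ℝ) ≤ k := Nat.cast_nonneg k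
        have es : stair (2 * k + 1) = ((k : ℤ) - 1, (k : ℤ)) := by
          simp only [stair, Prod.mk.injEq]; push_cast; omega
        rw [es]
        have hA : e < ((k : ℝ) - e + w) / u := by
          rw [lt_div_iff₀ hu0]; nlinarith
        have hB : ((k : ℝ) - e + w) / u ≤ 1 := by
          rw [div_le_one hu0]; linarith
        apply key _ (k - e) <;> push_cast <;> linarith

lemma upper_sq {ℓ : ℝ} (hℓ : 0 < ℓ) {N : ℕ} (hN : 1 ≤ N) (h : N ≤ maxTiles 1 1 ℓ) :
    ∃ A B : ℤ, -1 ≤ A ∧ -1 ≤ B ∧ (N : ℤ) - 3 ≤ A + B ∧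
      (0 ≤ A → 0 ≤ B → (A : ℝ) ^ 2 + (B : ℝ) ^ 2 < ℓ ^ 2) ∧
      (0 ≤ A → (A : ℝ) ^ 2 < ℓ ^ 2) ∧ (0 ≤ B → (B : ℝ) ^ 2 < ℓ ^ 2) := by
  obtain ⟨p, q, hl, hc⟩ := exists_of_le hℓ h
  obtain ⟨a, b, ha, hb, hab, h1, h2⟩ := upper p q (hN.trans hc)
  have hs := segLen_sq p q
  rw [hl] at hs
  have n1 := abs_nonneg (p.1 - q.1)
  have n2 := abs_nonneg (p.2 - q.2)
  have i1 : 0 ≤ a - 1 → ((a - 1 : ℤ) : ℝ) ^ 2 < |p.1 - q.1| ^ 2 := by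
    intro h
    have : (0 : ℝ) ≤ ((a - 1 : ℤ) : ℝ) := by exact_mod_cast h
    apply pow_lt_pow_left₀ _ this two_ne_zero
    push_cast; linarith
  have i2 : 0 ≤ b - 1 → ((b - 1 : ℤ) : ℝ) ^ 2 < |p.2 - q.2| ^ 2 := by
    intro h
    have : (0 : ℝ) ≤ ((b - 1 : ℤ) : ℝ) := by exact_mod_cast h
    apply pow_lt_pow_left₀ _ this two_ne_zero
    push_cast; linarith
  refine ⟨a - 1, b - 1, by omega, by omega, by omega, ?_, ?_, ?_⟩
  · intro u v
    have := i1 u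
    have := i2 v
    linarith
  · intro u
    have := i1 u
    nlinarith
  · intro v
    have := i2 v
    nlinarith

lemma odd_iff {ℓ : ℝ} (hℓ : 0 < ℓ) (m : ℕ) :
    2 * m + 3 ≤ maxTiles 1 1 ℓ ↔ 2 * (m : ℝ) ^ 2 < ℓ ^ 2 := by
  refine ⟨fun h => ?_, odd_le hℓ m⟩
  obtain ⟨A, B, hA, hB, hAB, h1, h2, h3⟩ := upper_sq hℓ (by omega) h
  have hAB' : 2 * (m : ℝ) ≤ A + B := by
    have : 2 * (m : ℤ) ≤ A + B := by push_cast at hAB; omega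
    exact_mod_cast this
  have hm : (0 : ℝ) ≤ m := Nat.cast_nonneg m
  rcases lt_or_ge A 0 with a | a
  · obtain rfl : A = -1 := by omega
    have := h3 (by omega)
    push_cast at hAB'
    nlinarith
  · rcases lt_or_ge B 0 with b | b
    · obtain rfl : B = -1 := by omega
      have := h2 (by omega)
      push_cast at hAB'
      nlinarith
    · have := h1 a b
      nlinarith [sq_nonneg ((A : ℝ) - B)]

lemma even_iff {ℓ : ℝ} (hℓ : 0 < ℓ) (m : ℕ) :
    2 * m + 4 ≤ maxTiles 1 1 ℓ ↔ (m : ℝ) ^ 2 + ((m : ℝ) + 1) ^ 2 < ℓ ^ 2 := by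
  refine ⟨fun h => ?_, even_le hℓ m⟩
  obtain ⟨A, B, hA, hB, hAB, h1, h2, h3⟩ := upper_sq hℓ (by omega) h
  have hAB' : 2 * (m : ℝ) + 1 ≤ A + B := by
    have : 2 * (m : ℤ) + 1 ≤ A + B := by push_cast at hAB; omega
    exact_mod_cast this
  have hm : (0 : ℝ) ≤ m := Nat.cast_nonneg m
  have hint : ∀ X : ℤ, 0 ≤ ((X : ℝ) - m) * (X - m - 1) := by
    intro X
    have : 0 ≤ (X - m) * (X - m - 1) := by
      rcases le_or_gt X m with h | h
      · exact mul_nonneg_of_nonpos_of_nonpos (by omega) (by omega)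
      · exact mul_nonneg (by omega) (by omega)
    exact_mod_cast this
  rcases lt_or_ge A 0 with a | a
  · obtain rfl : A = -1 := by omega
    have := h3 (by omega)
    push_cast at hAB'
    nlinarith
  · rcases lt_or_ge B 0 with b | b
    · obtain rfl : B = -1 := by omega
      have := h2 (by omega)
      push_cast at hAB'
      nlinarith
    · have := h1 a b
      nlinarith [hint A, hint B]

lemma odd_thr {ℓ : ℝ} (hℓ : 0 < ℓ) (m : ℕ) :
    2 * (m : ℝ) ^ 2 < ℓ ^ 2 ↔ (2 * (m : ℝ)) / Real.sqrt 2 < ℓ := by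
  have hm : (0 : ℝ) ≤ m := Nat.cast_nonneg m
  rw [← pow_lt_pow_iff_left₀ (by positivity) hℓ.le two_ne_zero, div_pow,
    Real.sq_sqrt (by norm_num)]
  rw [show (2 * (m : ℝ)) ^ 2 / 2 = 2 * (m : ℝ) ^ 2 by ring]

lemma even_thr {ℓ : ℝ} (hℓ : 0 < ℓ) (m : ℕ) :
    (m : ℝ) ^ 2 + ((m : ℝ) + 1) ^ 2 < ℓ ^ 2 ↔
      Real.sqrt ((2 * (m : ℝ)) ^ 2 + (2 * (m : ℝ) + 2) ^ 2) / 2 < ℓ := by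
  rw [← pow_lt_pow_iff_left₀ (by positivity) hℓ.le two_ne_zero, div_pow,
    Real.sq_sqrt (by positivity)]
  rw [show ((2 * (m : ℝ)) ^ 2 + (2 * (m : ℝ) + 2) ^ 2) / 2 ^ 2 =
    (m : ℝ) ^ 2 + ((m : ℝ) + 1) ^ 2 by ring]

theorem stmt_13 (ℓ : ℝ) (hℓ : 0 < ℓ) :
    (∀ N : ℕ, Odd N → 3 ≤ N →
      (maxTiles 1 1 ℓ = N ↔
        ((N : ℝ) - 3) / Real.sqrt 2 < ℓ ∧
          ℓ ≤ Real.sqrt (((N : ℝ) - 3) ^ 2 + ((N : ℝ) - 1) ^ 2) / 2)) ∧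
    (∀ N : ℕ, Even N → 4 ≤ N →
      (maxTiles 1 1 ℓ = N ↔
        Real.sqrt (((N : ℝ) - 4) ^ 2 + ((N : ℝ) - 2) ^ 2) / 2 < ℓ ∧
          ℓ ≤ ((N : ℝ) - 2) / Real.sqrt 2)) := by
  constructor
  · intro N hN h3
    obtain ⟨m, rfl⟩ : ∃ m, N = 2 * m + 3 := by
      obtain ⟨k, rfl⟩ := hN
      exact ⟨k - 1, by omega⟩
    have e1 : (((2 * m + 3 : ℕ) : ℝ) - 3) = 2 * (m : ℝ) := by push_cast; ring
    have e2 : (((2 * m + 3 : ℕ) : ℝ) - 1) = 2 * (m : ℝ) + 2 := by push_cast; ring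
    rw [e1, e2, ← odd_thr hℓ, ← odd_iff hℓ, ← not_lt (a := _ / _), ← even_thr hℓ, ← even_iff hℓ]
    omega
  · intro N hN h4
    obtain ⟨m, rfl⟩ : ∃ m, N = 2 * m + 4 := by
      obtain ⟨k, rfl⟩ := hN
      exact ⟨k - 2, by omega⟩
    have e1 : (((2 * m + 4 : ℕ) : ℝ) - 4) = 2 * (m : ℝ) := by push_cast; ring
    have e2 : (((2 * m + 4 : ℕ) : ℝ) - 2) = 2 * (m : ℝ) + 2 := by push_cast; ring
    have e3 : 2 * (m : ℝ) + 2 = 2 * ((m + 1 : ℕ) : ℝ) := by push_cast; ring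
    rw [e1, e2, ← even_thr hℓ, ← even_iff hℓ, e3, ← not_lt (a := _ / _), ← odd_thr hℓ, ← odd_iff hℓ]
    omega
end

section
/- Let a, b, ℓ > 0. The expected number of tiles of the a×b grid visited by a uniformly random segment of length ℓ equals 2·ℓ·(1/a + 1/b)/π + 1; that is, ∫_Ω (number of visited tiles of S_ω) dP(ω) = 2·ℓ·(1/a + 1/b)/π + 1. -/
open Set

open MeasureTheory

/-- Uniform probability measure on `Ω = [0,a) × [0,b) × [0,2π)`. -/
noncomputable def unifP (a b : ℝ) : Measure (ℝ × ℝ × ℝ) :=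
  (ENNReal.ofReal (2 * Real.pi * a * b))⁻¹ •
    (volume.restrict (Set.Ico (0:ℝ) a ×ˢ Set.Ico (0:ℝ) b ×ˢ Set.Ico (0:ℝ) (2 * Real.pi)))

/-- First endpoint of the random segment determined by `ω = (x₁, y₁, θ)`. -/
noncomputable def segPt1 (ω : ℝ × ℝ × ℝ) : ℝ × ℝ := (ω.1, ω.2.1)

/-- Second endpoint of the random segment of length `ℓ` determined by `ω = (x₁, y₁, θ)`. -/
noncomputable def segPt2 (ℓ : ℝ) (ω : ℝ × ℝ × ℝ) : ℝ × ℝ :=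
  (ω.1 + ℓ * Real.cos ω.2.2, ω.2.1 + ℓ * Real.sin ω.2.2)


theorem aux_encard {α : Type*} (s : Set α) :
    (s.ncard : ℝ) = (∑' x, s.indicator (1 : α → ENNReal) x).toReal := by
  have h : ∑' x, s.indicator (1 : α → ENNReal) x = s.encard := by
    rw [← ENNReal.tsum_set_one, ← tsum_subtype]
    rfl
  rw [h, Set.ncard]
  cases hs : s.encard with
  | top => simp
  | coe n => simp

theorem aux_int_sin_half : ∫ x in (0:ℝ)..Real.pi, |Real.sin x| = 2 := by
  have : ∫ x in (0:ℝ)..Real.pi, |Real.sin x| = ∫ x in (0:ℝ)..Real.pi, Real.sin x := by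
    apply intervalIntegral.integral_congr
    intro x hx
    rw [uIcc_of_le Real.pi_pos.le] at hx
    exact abs_of_nonneg (Real.sin_nonneg_of_nonneg_of_le_pi hx.1 hx.2)
  rw [this, integral_sin]
  norm_num

theorem aux_per_sin : Function.Periodic (fun x => |Real.sin x|) Real.pi := by
  intro x
  simp [Real.sin_add_pi]

theorem aux_int_sin (t : ℝ) : ∫ x in t..(t + 2*Real.pi), |Real.sin x| = 4 := by
  have hc : Continuous fun x => |Real.sin x| := by fun_prop
  rw [← intervalIntegral.integral_add_adjacent_intervals (b := t + Real.pi)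
    (hc.intervalIntegrable _ _) (hc.intervalIntegrable _ _)]
  rw [show t + 2 * Real.pi = (t + Real.pi) + Real.pi by ring,
    aux_per_sin.intervalIntegral_add_eq t 0, aux_per_sin.intervalIntegral_add_eq (t + Real.pi) 0,
    zero_add, aux_int_sin_half]
  norm_num

theorem aux_int_cos : ∫ x in (0:ℝ)..(2*Real.pi), |Real.cos x| = 4 := by
  simp_rw [← Real.sin_add_pi_div_two]
  rw [intervalIntegral.integral_comp_add_right (fun x => |Real.sin x|),
    show 2 * Real.pi + Real.pi / 2 = (0 + Real.pi / 2) + 2 * Real.pi by ring, aux_int_sin]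

theorem aux_interval_nonneg (I : Set ℝ) (hI : I.OrdConnected) (hne : I.Nonempty)
    (hsub : I ⊆ Icc 0 1) (b w : ℝ) (hb : 0 < b) (hw : 0 ≤ w) :
    volume {y : ℝ | ∃ t ∈ I, y + t * w ∈ Ioo 0 b} =
      ENNReal.ofReal b + ENNReal.ofReal w * volume I := by
  have hba : BddAbove I := ⟨1, fun t ht => (hsub ht).2⟩
  have hbb : BddBelow I := ⟨0, fun t ht => (hsub ht).1⟩
  have hsr : sInf I ≤ sSup I := csInf_le_csSup hne hbb hba
  have hvol : volume I = ENNReal.ofReal (sSup I - sInf I) := by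
    apply le_antisymm
    · rw [← Real.volume_Icc]
      exact measure_mono fun t ht => ⟨csInf_le hbb ht, le_csSup hba ht⟩
    · rw [← Real.volume_Ioo]
      apply measure_mono
      rintro t ⟨h1, h2⟩
      obtain ⟨t1, ht1, h3⟩ := exists_lt_of_csInf_lt hne h1
      obtain ⟨t2, ht2, h4⟩ := exists_lt_of_lt_csSup hne h2
      exact hI.out ht1 ht2 ⟨h3.le, h4.le⟩
  have hset : {y : ℝ | ∃ t ∈ I, y + t * w ∈ Ioo 0 b} =
      Ioo (-(sSup I * w)) (b - sInf I * w) := by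
    ext y
    constructor
    · rintro ⟨t, ht, h1, h2⟩
      have h3 := mul_le_mul_of_nonneg_right (csInf_le hbb ht) hw
      have h4 := mul_le_mul_of_nonneg_right (le_csSup hba ht) hw
      constructor <;> linarith
    · rintro ⟨h1, h2⟩
      rcases hw.eq_or_lt with rfl | hw
      · obtain ⟨t, ht⟩ := hne
        refine ⟨t, ht, ?_, ?_⟩ <;> simp at * <;> linarith
      · obtain ⟨t1, ht1, h3⟩ := exists_lt_of_lt_csSup hne
          (show -y / w < sSup I by rw [div_lt_iff₀ hw]; linarith)
        obtain ⟨t2, ht2, h4⟩ := exists_lt_of_csInf_lt hne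
          (show sInf I < (b - y) / w by rw [lt_div_iff₀ hw]; linarith)
        rw [div_lt_iff₀ hw] at h3
        rw [lt_div_iff₀ hw] at h4
        by_cases h5 : y + t1 * w < b
        · exact ⟨t1, ht1, by linarith, h5⟩
        by_cases h6 : 0 < y + t2 * w
        · exact ⟨t2, ht2, h6, by linarith⟩
        have h7 : (b / 2 - y) / w * w = b / 2 - y := div_mul_cancel₀ _ hw.ne'
        refine ⟨(b / 2 - y) / w, hI.out ht2 ht1 ⟨?_, ?_⟩, ?_, ?_⟩
        · rw [le_div_iff₀ hw]; linarith
        · rw [div_le_iff₀ hw]; linarith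
        · linarith
        · linarith
  rw [hset, Real.volume_Ioo, hvol, ← ENNReal.ofReal_mul hw, ← ENNReal.ofReal_add hb.le
    (mul_nonneg hw (sub_nonneg.2 hsr))]
  congr 1
  ring

theorem aux_interval (I : Set ℝ) (hI : I.OrdConnected) (hne : I.Nonempty)
    (hsub : I ⊆ Icc 0 1) (b w : ℝ) (hb : 0 < b) :
    volume {y : ℝ | ∃ t ∈ I, y + t * w ∈ Ioo 0 b} =
      ENNReal.ofReal b + ENNReal.ofReal |w| * volume I := by
  rcases le_total 0 w with hw | hw
  · rw [abs_of_nonneg hw]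
    exact aux_interval_nonneg I hI hne hsub b w hb hw
  · rw [abs_of_nonpos hw, ← aux_interval_nonneg I hI hne hsub b (-w) hb (by linarith),
      ← (Measure.measurePreserving_sub_left volume b).measure_preimage_emb
        (MeasurableEquiv.subLeft b).measurableEmbedding]
    congr 1
    ext y
    simp only [mem_ofPred_eq, mem_preimage, mem_Ioo]
    refine exists_congr fun t => and_congr_right fun _ => ?_
    constructor <;> rintro ⟨h1, h2⟩ <;> constructor <;> linarith

theorem aux_area (a b u w : ℝ) (ha : 0 < a) (hb : 0 < b) :
    ∫⁻ x : ℝ, volume {y : ℝ | ∃ t ∈ Icc (0:ℝ) 1, x + t * u ∈ Ioo 0 a ∧ y + t * w ∈ Ioo 0 b} =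
      ENNReal.ofReal (a * b + b * |u| + a * |w|) := by
  set J : ℝ → Set ℝ := fun x => {t | t ∈ Icc (0:ℝ) 1 ∧ x + t * u ∈ Ioo 0 a} with hJ
  set X : Set ℝ := {x | ∃ t ∈ Icc (0:ℝ) 1, x + t * u ∈ Ioo 0 a} with hX
  have hXm : MeasurableSet X := by
    have : X = ⋃ t ∈ Icc (0:ℝ) 1, (fun x => x + t * u) ⁻¹' Ioo 0 a := by
      ext x; simp only [hX, mem_iUnion, exists_prop]; rfl
    rw [this]
    apply IsOpen.measurableSet
    refine isOpen_biUnion fun t _ => isOpen_Ioo.preimage (by fun_prop)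
  have hXv : volume X = ENNReal.ofReal a + ENNReal.ofReal |u| := by
    rw [hX, aux_interval (Icc 0 1) ordConnected_Icc ⟨0, by simp⟩ subset_rfl a u ha]
    simp
  have hJc : ∀ x, (J x).OrdConnected := by
    intro x
    apply Convex.ordConnected
    have h1 : J x = Icc 0 1 ∩ (fun t => x + t * u) ⁻¹' Ioo 0 a := rfl
    intro t ⟨ht, ht'⟩ s ⟨hs, hs'⟩ p q hp hq hpq
    refine ⟨convex_Icc 0 1 ht hs hp hq hpq, ?_⟩
    have := convex_Ioo 0 a ht' hs' hp hq hpq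
    convert this using 1
    simp only [smul_eq_mul]
    linear_combination (-x) * hpq
  have hslice : ∀ x, volume {y : ℝ | ∃ t ∈ Icc (0:ℝ) 1, x + t * u ∈ Ioo 0 a ∧ y + t * w ∈ Ioo 0 b}
      = X.indicator (fun _ => ENNReal.ofReal b) x + ENNReal.ofReal |w| * volume (J x) := by
    intro x
    have h1 : {y : ℝ | ∃ t ∈ Icc (0:ℝ) 1, x + t * u ∈ Ioo 0 a ∧ y + t * w ∈ Ioo 0 b}
        = {y : ℝ | ∃ t ∈ J x, y + t * w ∈ Ioo 0 b} := by
      ext y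
      simp only [hJ, mem_ofPred_eq, and_assoc]
    rw [h1]
    by_cases hx : x ∈ X
    · rw [indicator_of_mem hx]
      obtain ⟨t, ht, ht'⟩ := hx
      exact aux_interval (J x) (hJc x) ⟨t, ht, ht'⟩ (fun t ht => ht.1) b w hb
    · rw [indicator_of_notMem hx]
      have : J x = ∅ := by
        ext t
        simp only [mem_empty_iff_false, iff_false]
        exact fun ht => hx ⟨t, ht.1, ht.2⟩
      simp [this]
  have hJm : MeasurableSet {p : ℝ × ℝ | p.2 ∈ Icc (0:ℝ) 1 ∧ p.1 + p.2 * u ∈ Ioo 0 a} := by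
    apply MeasurableSet.inter
    · exact measurableSet_Icc.preimage measurable_snd
    · exact measurableSet_Ioo.preimage (f := fun p : ℝ × ℝ => p.1 + p.2 * u) (by fun_prop)
  have hJint : ∫⁻ x, volume (J x) = ENNReal.ofReal a := by
    have h1 := Measure.prod_apply (μ := (volume : Measure ℝ)) (ν := (volume : Measure ℝ)) hJm
    have h2 := Measure.prod_apply_symm (μ := (volume : Measure ℝ)) (ν := (volume : Measure ℝ)) hJm
    rw [h1] at h2
    refine Eq.trans h2 ?_
    have h3 : ∀ t : ℝ, volume ((fun x => (x, t)) ⁻¹'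
        {p : ℝ × ℝ | p.2 ∈ Icc (0:ℝ) 1 ∧ p.1 + p.2 * u ∈ Ioo 0 a}) =
        (Icc (0:ℝ) 1).indicator (fun _ => ENNReal.ofReal a) t := by
      intro t
      by_cases ht : t ∈ Icc (0:ℝ) 1
      · rw [indicator_of_mem ht]
        have : ((fun x => (x, t)) ⁻¹'
          {p : ℝ × ℝ | p.2 ∈ Icc (0:ℝ) 1 ∧ p.1 + p.2 * u ∈ Ioo 0 a}) =
          (fun x => x + t * u) ⁻¹' Ioo 0 a := by
          ext x
          simp only [mem_preimage, mem_ofPred_eq]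
          exact and_iff_right ht
        rw [this, measure_preimage_add_right, Real.volume_Ioo, sub_zero]
      · rw [indicator_of_notMem ht]
        have : ((fun x => (x, t)) ⁻¹'
          {p : ℝ × ℝ | p.2 ∈ Icc (0:ℝ) 1 ∧ p.1 + p.2 * u ∈ Ioo 0 a}) = ∅ := by
          ext x
          simp only [mem_preimage, mem_ofPred_eq, mem_empty_iff_false, iff_false]
          exact fun h => ht h.1
        rw [this, measure_empty]
    simp_rw [h3]
    rw [lintegral_indicator measurableSet_Icc]
    simp
  simp_rw [hslice]
  rw [lintegral_add_left (measurable_const.indicator hXm), lintegral_indicator hXm,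
    lintegral_const_mul' _ _ ENNReal.ofReal_ne_top, hJint, setLIntegral_const, hXv,
    ← ENNReal.ofReal_add ha.le (abs_nonneg u), ← ENNReal.ofReal_mul hb.le,
    ← ENNReal.ofReal_mul (abs_nonneg w), ← ENNReal.ofReal_add (by positivity) (by positivity)]
  congr 1
  ring

/-- Base event: segment meets the tile `(0,a) × (0,b)`. -/
def auxM (a b ℓ : ℝ) : Set (ℝ × ℝ × ℝ) :=
  {ω | ∃ t ∈ Icc (0:ℝ) 1, ω.1 + t * (ℓ * Real.cos ω.2.2) ∈ Ioo 0 a ∧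
    ω.2.1 + t * (ℓ * Real.sin ω.2.2) ∈ Ioo 0 b}

theorem auxM_meas (a b ℓ : ℝ) : MeasurableSet (auxM a b ℓ) := by
  have : auxM a b ℓ = ⋃ t ∈ Icc (0:ℝ) 1,
      ((fun ω : ℝ × ℝ × ℝ => ω.1 + t * (ℓ * Real.cos ω.2.2)) ⁻¹' Ioo 0 a ∩
      (fun ω : ℝ × ℝ × ℝ => ω.2.1 + t * (ℓ * Real.sin ω.2.2)) ⁻¹' Ioo 0 b) := by
    ext x; simp only [auxM, mem_iUnion, exists_prop]; rfl
  rw [this]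
  apply IsOpen.measurableSet
  exact isOpen_biUnion fun t _ =>
    (isOpen_Ioo.preimage (by fun_prop)).inter (isOpen_Ioo.preimage (by fun_prop))

theorem aux_vol (a b ℓ : ℝ) (ha : 0 < a) (hb : 0 < b) (hℓ : 0 < ℓ) :
    volume (auxM a b ℓ ∩ univ ×ˢ univ ×ˢ Ico 0 (2 * Real.pi)) =
      ENNReal.ofReal (2 * Real.pi * a * b + 4 * ℓ * (a + b)) := by
  have hm : MeasurableSet (auxM a b ℓ ∩ univ ×ˢ univ ×ˢ Ico 0 (2 * Real.pi)) :=
    (auxM_meas a b ℓ).inter (MeasurableSet.univ.prod (MeasurableSet.univ.prod measurableSet_Ico))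
  set N := auxM a b ℓ ∩ univ ×ˢ univ ×ˢ Ico 0 (2 * Real.pi) with hN
  have hf : Measurable (N.indicator (1 : ℝ × ℝ × ℝ → ENNReal)) := measurable_one.indicator hm
  set f := N.indicator (1 : ℝ × ℝ × ℝ → ENNReal) with hfdef
  have h1 : volume N = ∫⁻ x : ℝ, ∫⁻ θ : ℝ, ∫⁻ y : ℝ, f (x, y, θ) := by
    rw [← lintegral_indicator_one hm, Measure.volume_eq_prod, lintegral_prod _ hf.aemeasurable]
    refine lintegral_congr fun x => ?_
    rw [Measure.volume_eq_prod, lintegral_prod_symm _ (by fun_prop)]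
  rw [h1, lintegral_lintegral_swap (by
    apply Measurable.aemeasurable
    apply Measurable.lintegral_prod_right' (f := fun p : (ℝ × ℝ) × ℝ => f (p.1.1, p.2, p.1.2))
    fun_prop)]
  have h2 : ∀ θ : ℝ, ∫⁻ x : ℝ, ∫⁻ y : ℝ, f (x, y, θ) =
      (Ico 0 (2 * Real.pi)).indicator (fun θ => ENNReal.ofReal
        (a * b + b * |ℓ * Real.cos θ| + a * |ℓ * Real.sin θ|)) θ := by
    intro θ
    by_cases hθ : θ ∈ Ico 0 (2 * Real.pi)
    · rw [indicator_of_mem hθ, ← aux_area a b _ _ ha hb]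
      refine lintegral_congr fun x => ?_
      rw [← lintegral_indicator_one]
      · refine lintegral_congr fun y => ?_
        simp only [hfdef, hN]
        have : (x, y, θ) ∈ auxM a b ℓ ∩ univ ×ˢ univ ×ˢ Ico 0 (2 * Real.pi) ↔
          y ∈ {y | ∃ t ∈ Icc (0:ℝ) 1, x + t * (ℓ * Real.cos θ) ∈ Ioo 0 a ∧
            y + t * (ℓ * Real.sin θ) ∈ Ioo 0 b} := by
          constructor
          · exact fun h => h.1
          · exact fun h => ⟨h, ⟨trivial, trivial, hθ⟩⟩
        by_cases hy : (x, y, θ) ∈ auxM a b ℓ ∩ univ ×ˢ univ ×ˢ Ico 0 (2 * Real.pi)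
        · rw [indicator_of_mem hy, indicator_of_mem (this.1 hy)]; rfl
        · rw [indicator_of_notMem hy, indicator_of_notMem (fun h => hy (this.2 h))]
      · exact (auxM_meas a b ℓ).preimage (f := fun y => (x, y, θ)) (by fun_prop)
    · rw [indicator_of_notMem hθ]
      have : ∀ x y, f (x, y, θ) = 0 := fun x y =>
        indicator_of_notMem (fun h => hθ h.2.2.2) _
      simp [this]
  simp_rw [h2]
  rw [lintegral_indicator measurableSet_Ico]
  have hcont : Continuous fun θ => a * b + b * |ℓ * Real.cos θ| + a * |ℓ * Real.sin θ| := by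
    fun_prop
  rw [← ofReal_integral_eq_lintegral_ofReal]
  · congr 1
    rw [integral_Ico_eq_integral_Ioc, ← intervalIntegral.integral_of_le (by positivity)]
    simp_rw [abs_mul, abs_of_pos hℓ]
    have i1 : IntervalIntegrable (fun θ => a * b + b * (ℓ * |Real.cos θ|)) volume 0
      (2 * Real.pi) := Continuous.intervalIntegrable (by fun_prop) _ _
    have i2 : IntervalIntegrable (fun θ => a * (ℓ * |Real.sin θ|)) volume 0
      (2 * Real.pi) := Continuous.intervalIntegrable (by fun_prop) _ _
    have i3 : IntervalIntegrable (fun θ => b * (ℓ * |Real.cos θ|)) volume 0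
      (2 * Real.pi) := Continuous.intervalIntegrable (by fun_prop) _ _
    have hs := aux_int_sin 0
    rw [zero_add] at hs
    rw [intervalIntegral.integral_add i1 i2, intervalIntegral.integral_add (by simp) i3]
    simp only [intervalIntegral.integral_const_mul, intervalIntegral.integral_const, hs,
      aux_int_cos, smul_eq_mul]
    ring
  · exact (hcont.integrableOn_Icc (a := 0) (b := 2 * Real.pi)).mono_set Ico_subset_Icc_self
  · exact Filter.Eventually.of_forall fun θ => by positivity

/-- Event that the segment meets tile `(k,l)`. -/
def auxE (a b ℓ : ℝ) (kl : ℤ × ℤ) : Set (ℝ × ℝ × ℝ) :=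
  {ω | (segment ℝ (segPt1 ω) (segPt2 ℓ ω) ∩ tileInt a b kl.1 kl.2).Nonempty}

theorem auxE_eq (a b ℓ : ℝ) (kl : ℤ × ℤ) :
    auxE a b ℓ kl = (fun ω => ω + (-(kl.1 * a), -(kl.2 * b), 0)) ⁻¹' auxM a b ℓ := by
  ext ⟨x, y, θ⟩
  simp only [auxE, auxM, mem_ofPred_eq, mem_preimage, segment_eq_image', segPt1, segPt2, tileInt]
  constructor
  · rintro ⟨p, ⟨t, ht, rfl⟩, h1, h2⟩
    simp at h1 h2
    refine ⟨t, ht, ?_, ?_⟩ <;> simp <;> constructor <;> linarith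
  · rintro ⟨t, ht, h1, h2⟩
    refine ⟨_, ⟨t, ht, rfl⟩, ?_, ?_⟩ <;> simp at * <;> constructor <;> linarith

theorem auxE_meas (a b ℓ : ℝ) (kl : ℤ × ℤ) : MeasurableSet (auxE a b ℓ kl) := by
  rw [auxE_eq]
  exact (auxM_meas a b ℓ).preimage (by fun_prop)

theorem aux_sum (a b ℓ : ℝ) (ha : 0 < a) (hb : 0 < b) :
    ∑' kl : ℤ × ℤ, volume (auxE a b ℓ kl ∩ Ico 0 a ×ˢ Ico 0 b ×ˢ Ico 0 (2 * Real.pi)) =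
      volume (auxM a b ℓ ∩ univ ×ˢ univ ×ˢ Ico 0 (2 * Real.pi)) := by
  have i2 : (volume : Measure (ℝ × ℝ)).IsAddRightInvariant := by
    rw [Measure.volume_eq_prod]; infer_instance
  have i3 : (volume : Measure (ℝ × ℝ × ℝ)).IsAddRightInvariant := by
    rw [Measure.volume_eq_prod]; infer_instance
  set D : ℤ × ℤ → Set (ℝ × ℝ × ℝ) := fun kl =>
    Ico (0 + (-kl.1) • a) (0 + (-kl.1 + 1) • a) ×ˢ Ico (0 + (-kl.2) • b) (0 + (-kl.2 + 1) • b) ×ˢ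
      Ico 0 (2 * Real.pi) with hD
  have hU : auxM a b ℓ ∩ univ ×ˢ univ ×ˢ Ico 0 (2 * Real.pi) = ⋃ kl, auxM a b ℓ ∩ D kl := by
    rw [← inter_iUnion]
    congr 1
    ext ⟨x, y, θ⟩
    simp only [mem_prod, mem_univ, true_and, mem_iUnion, hD]
    constructor
    · intro h
      have hx : x ∈ (univ : Set ℝ) := trivial
      have hy : y ∈ (univ : Set ℝ) := trivial
      rw [← iUnion_Ico_add_zsmul ha 0, mem_iUnion] at hx
      rw [← iUnion_Ico_add_zsmul hb 0, mem_iUnion] at hy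
      obtain ⟨i, hi⟩ := hx
      obtain ⟨j, hj⟩ := hy
      exact ⟨(-i, -j), by simpa using hi, by simpa using hj, h⟩
    · rintro ⟨kl, -, -, h⟩
      exact h
  rw [hU, measure_iUnion]
  · refine tsum_congr fun kl => ?_
    rw [← measure_preimage_add_right volume (-(kl.1 * a), -(kl.2 * b), 0) (auxM a b ℓ ∩ D kl),
      preimage_inter, ← auxE_eq]
    congr 2
    ext ⟨x, y, θ⟩
    simp only [hD, mem_prod, mem_preimage, mem_Ico, Prod.mk_add_mk, zsmul_eq_mul]
    push_cast
    constructor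
    · rintro ⟨⟨h1, h2⟩, ⟨h3, h4⟩, h5, h6⟩
      refine ⟨⟨?_, ?_⟩, ⟨?_, ?_⟩, ?_, ?_⟩ <;> linarith
    · rintro ⟨⟨h1, h2⟩, ⟨h3, h4⟩, h5, h6⟩
      refine ⟨⟨?_, ?_⟩, ⟨?_, ?_⟩, ?_, ?_⟩ <;> linarith
  · intro i j hij
    apply Disjoint.mono inter_subset_right inter_subset_right
    rw [Set.disjoint_left]
    rintro ⟨x, y, θ⟩ ⟨h1, h2, -⟩ ⟨h3, h4, -⟩
    apply hij
    have e1 := (pairwise_disjoint_Ico_add_zsmul (0:ℝ) a)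
    have e2 := (pairwise_disjoint_Ico_add_zsmul (0:ℝ) b)
    have f1 : -i.1 = -j.1 := by
      by_contra hne
      exact (Set.disjoint_left.1 (e1 hne)) h1 h3
    have f2 : -i.2 = -j.2 := by
      by_contra hne
      exact (Set.disjoint_left.1 (e2 hne)) h2 h4
    exact Prod.ext (neg_injective f1) (neg_injective f2)
  · intro kl
    exact (auxM_meas a b ℓ).inter (measurableSet_Ico.prod (measurableSet_Ico.prod measurableSet_Ico))

theorem stmt_17 (a b ℓ : ℝ) (ha : 0 < a) (hb : 0 < b) (hℓ : 0 < ℓ) :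
    ∫ ω : ℝ × ℝ × ℝ, (visitCount a b (segPt1 ω) (segPt2 ℓ ω) : ℝ) ∂(unifP a b) =
      2 * ℓ * (1 / a + 1 / b) / Real.pi + 1 := by
  have hpi := Real.pi_pos
  have hΩ : MeasurableSet (Ico (0:ℝ) a ×ˢ Ico (0:ℝ) b ×ˢ Ico (0:ℝ) (2 * Real.pi)) :=
    measurableSet_Ico.prod (measurableSet_Ico.prod measurableSet_Ico)
  set F : ℝ × ℝ × ℝ → ENNReal := fun ω =>
    ∑' kl : ℤ × ℤ, (auxE a b ℓ kl).indicator (1 : ℝ × ℝ × ℝ → ENNReal) ω with hF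
  have hFm : Measurable F :=
    Measurable.tsum fun kl => measurable_one.indicator (auxE_meas a b ℓ kl)
  have h1 : ∀ ω, (visitCount a b (segPt1 ω) (segPt2 ℓ ω) : ℝ) = (F ω).toReal := by
    intro ω
    rw [visitCount, aux_encard]
    rfl
  have hc : (0:ℝ) < 2 * Real.pi * a * b := by positivity
  have h2 : ∫⁻ ω, F ω ∂(unifP a b) =
      ENNReal.ofReal (2 * ℓ * (1 / a + 1 / b) / Real.pi + 1) := by
    rw [unifP, lintegral_smul_measure, hF, lintegral_tsum fun kl =>
      (measurable_one.indicator (auxE_meas a b ℓ kl)).aemeasurable]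
    simp_rw [lintegral_indicator_one (auxE_meas a b ℓ _),
      Measure.restrict_apply (auxE_meas a b ℓ _)]
    rw [aux_sum a b ℓ ha hb, aux_vol a b ℓ ha hb hℓ, smul_eq_mul,
      ← ENNReal.ofReal_inv_of_pos hc, ← ENNReal.ofReal_mul (by positivity)]
    congr 1
    field_simp
    ring
  simp_rw [h1]
  rw [integral_toReal hFm.aemeasurable (ae_lt_top hFm (by rw [h2]; exact ENNReal.ofReal_ne_top)),
    h2, ENNReal.toReal_ofReal (by positivity)]
end
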